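/- There exists a constant C > 0 such that for all η ∈ (0, 1/2], the statement B(η, η², η^{−C/η}) holds; that is, for any independent finitely supported random variables X, Y on G = 𝔽₂ⁿ, there is a subspace V ⊆ G with H[𝐔_V] ≤ η^{−C/η} (H[X] + H[Y]) such that H[π_V(X) + π_V(Y)] ≥ (1 − η)(H[π_V(X)] + H[π_V(Y)]) − η² (H[X] + H[Y]). -/

import Mathlib

open Real Pointwise

noncomputable section

abbrev Fvec (n : ℕ) : Type := Fin n → ZMod 2

/-- Shannon entropy (natural log) of a finitely supported distribution. -/
def ent {A : Type*} (p : A → ℝ) : ℝ := ∑ᶠ a, Real.negMulLog (p a)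

/-- `p` is a (finitely supported) probability distribution. -/
def IsDist {A : Type*} (p : A → ℝ) : Prop := (∀ a, 0 ≤ p a) ∧ ∑ᶠ a, p a = 1

/-- Pushforward of a distribution along a map: the distribution of `f(X)` for `X ∼ p`. -/
def push {A B : Type*} (f : A → B) (p : A → ℝ) : B → ℝ := fun b => ∑ᶠ a ∈ f ⁻¹' {b}, p a

/-- Joint distribution of a pair of independent random variables. -/
def prodDist {A B : Type*} (p : A → ℝ) (q : B → ℝ) : A × B → ℝ := fun z => p z.1 * q z.2

/-- Distribution of `X + Y` for independent `X ∼ p`, `Y ∼ q`. -/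
def conv {A : Type*} [AddGroup A] (p q : A → ℝ) : A → ℝ := fun z => ∑ᶠ x, p x * q (z - x)

/-- The distribution of `X` conditioned on `U = b`, where `r` is the joint distribution of `(X, U)`. -/
def fiber {A B : Type*} (r : A × B → ℝ) (b : B) : A → ℝ := fun a => r (a, b) / push Prod.snd r b

/-- Conditional entropy `H[X | U]` of a joint distribution `r` of `(X, U)`. -/
def condEnt {A B : Type*} (r : A × B → ℝ) : ℝ := ∑ᶠ b, push Prod.snd r b * ent (fiber r b)

/-- Doubling mass `s[X ; Y]` (of independent copies with distributions `p`, `q`). -/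
def sDouble {A : Type*} [AddGroup A] (p q : A → ℝ) : ℝ := ent p + ent q - ent (conv p q)

/-- Conditional doubling mass `s[X | U ; Y | W] = 𝔼_{u ∼ U, w ∼ W} s[X_u ; Y_w]`,
where `r1`, `r2` are the joint distributions of `(X, U)` and `(Y, W)`. -/
def sCond {A U W : Type*} [AddGroup A] (r1 : A × U → ℝ) (r2 : A × W → ℝ) : ℝ :=
  ∑ᶠ u, ∑ᶠ w, push Prod.snd r1 u * push Prod.snd r2 w * sDouble (fiber r1 u) (fiber r2 w)

/-- Conditional mutual information `I[A : B | S]` of a joint distribution of `(A, B, S)`. -/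
def condMI {A B S : Type*} (r : A × B × S → ℝ) : ℝ :=
  ent (push (fun z => (z.1, z.2.2)) r) + ent (push (fun z => z.2) r)
    - ent r - ent (push (fun z => z.2.2) r)

/-- Uniform distribution on a set. -/
def unifOn {A : Type*} (s : Set A) : A → ℝ := s.indicator fun _ => (Nat.card s : ℝ)⁻¹

/-- Entropic Ruzsa distance `d[X ; Y]`. -/
def dRuzsa {A : Type*} [AddGroup A] (p q : A → ℝ) : ℝ := ent (conv p q) - ent p / 2 - ent q / 2

/-- Joint distribution of `(X, X + Y)` for independent `X ∼ p`, `Y ∼ q`. -/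
def jointSum {A : Type*} [AddGroup A] (p q : A → ℝ) : A × A → ℝ :=
  push (fun z : A × A => (z.1, z.1 + z.2)) (prodDist p q)

/-- Joint distribution of `(X, π_V(X))`. -/
def selfProj {n : ℕ} (V : Submodule (ZMod 2) (Fvec n)) (p : Fvec n → ℝ) :
    Fvec n × (Fvec n ⧸ V) → ℝ := push (fun x => (x, V.mkQ x)) p

/-- Joint distribution of independent `(X₁, X₂, Y₁, Y₂)` with `X₁, X₂ ∼ p` and `Y₁, Y₂ ∼ q`. -/
def quad {A : Type*} (p q : A → ℝ) : A × A × A × A → ℝ :=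
  fun z => p z.1 * p z.2.1 * q z.2.2.1 * q z.2.2.2

/-- Distribution of `X₁ + ⋯ + X_k` for independent `Xᵢ ∼ p i`. -/
def indepSum {A : Type*} [AddCommGroup A] (k : ℕ) (p : Fin k → A → ℝ) : A → ℝ :=
  push (fun x : Fin k → A => ∑ i, x i) (fun x => ∏ i, p i (x i))

/-- Statement `A(η, L, c)` from the paper. -/
def StA (η L c : ℝ) : Prop :=
  ∀ (n : ℕ) (p q : Fvec n → ℝ), IsDist p → IsDist q →
    ent (conv p q) ≤ (1 - η) * (ent p + ent q) →
    ∃ V : Submodule (ZMod 2) (Fvec n),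
      ent (unifOn (V : Set (Fvec n))) ≤ L * (ent p + ent q) ∧
      ent (push V.mkQ p) + ent (push V.mkQ q) ≤ (1 - c) * (ent p + ent q)

/-- Statement `B(η, ε, L)` from the paper. -/
def StB (η ε L : ℝ) : Prop :=
  ∀ (n : ℕ) (p q : Fvec n → ℝ), IsDist p → IsDist q →
    ∃ V : Submodule (ZMod 2) (Fvec n),
      ent (unifOn (V : Set (Fvec n))) ≤ L * (ent p + ent q) ∧
      ent (conv (push V.mkQ p) (push V.mkQ q)) ≥
        (1 - η) * (ent (push V.mkQ p) + ent (push V.mkQ q)) - ε * (ent p + ent q)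


/-!
The main step lowers `η`: if `B(η, 0, L)` holds over all finite `𝔽₂`-spaces, then so does
`B(η - η² / 360, 0, O(η⁻⁴ L))`. About `360 / η` such steps lead from `1 / 2` to `η`, which accounts
for the bound `η^{-C / η}`.

For the step, choose `V` so that modulo `V` the laws of `X`, `Y`, `X + Y` and `X₁ + X₂` are robust:
no further quotient decreases their entropy by much. Then the subspaces provided by `B(η, 0, L)` can
be ignored, and the doubling masses of `X + Y` with itself, of `X₁ + X₂` with `Y₁ + Y₂`, and of the
variables `X | X + Y` and `X₁ | X₁ + X₂` with their counterparts all have relative size at most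
`e ≈ η`. If the doubling mass of `X` and `Y` also attained this bound, all these inequalities would
be nearly sharp, and by the entropic Balog–Szemerédi–Gowers inequality `A = X₁ + Y₂` and
`B = X₁ + Y₁`, conditioned on `A + B` and `S = X₁ + X₂ + Y₁ + Y₂`, would be close in Ruzsa
distance. The polynomial Freiman–Ruzsa theorem then makes the conditioned `A` nearly a uniform
variable on a coset, against which the robust `X | X + Y` has small doubling mass; this is
incompatible with the sharpness of the other inequalities and gives the saving of order `e²`.
-/

/-- The entropy of the random variable `X` on the finite probability space with law `P`. -/
local notation "H[" X ";" P "]" => ent (push X P)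

/-! ### Expectations -/

/-- The expectation `𝔼 Φ(i)` for `i ∼ Q`. Laws are compared by testing them against all `Φ`. -/
def mean {I : Type*} (Q Φ : I → ℝ) : ℝ := ∑ᶠ i, Q i * Φ i

section Mean

variable {I J : Type*}

lemma mean_eq_sum [Fintype I] (Q Φ : I → ℝ) : mean Q Φ = ∑ i, Q i * Φ i :=
  finsum_eq_sum_of_fintype _

lemma mean_congr {Q Φ Ψ : I → ℝ} (h : ∀ i, Q i ≠ 0 → Φ i = Ψ i) : mean Q Φ = mean Q Ψ :=
  finsum_congr fun i => by
    by_cases hi : Q i = 0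
    · simp [hi]
    · rw [h i hi]

lemma mean_const_mul (Q : I → ℝ) (c : ℝ) (Φ : I → ℝ) :
    mean Q (fun i => c * Φ i) = c * mean Q Φ := by
  simp only [mean, mul_left_comm, mul_finsum]

lemma mean_mul_const (Q : I → ℝ) (Φ : I → ℝ) (c : ℝ) :
    mean Q (fun i => Φ i * c) = mean Q Φ * c := by
  simp only [mean, ← mul_assoc, finsum_mul]

lemma mean_neg (Q Φ : I → ℝ) : mean Q (fun i => -Φ i) = -mean Q Φ := by
  simp only [mean, mul_neg, finsum_neg_distrib]

lemma IsDist.mean_const {Q : I → ℝ} (hQ : IsDist Q) (c : ℝ) : mean Q (fun _ => c) = c := by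
  rw [mean, ← finsum_mul, hQ.2, one_mul]

lemma IsDist.mean_nonneg {Q Φ : I → ℝ} (hQ : IsDist Q) (h : ∀ i, Q i ≠ 0 → 0 ≤ Φ i) :
    0 ≤ mean Q Φ :=
  finsum_nonneg fun i => by
    by_cases hi : Q i = 0
    · simp [hi]
    · exact mul_nonneg (hQ.1 i) (h i hi)

variable [Finite I]

lemma mean_add (Q Φ Ψ : I → ℝ) : mean Q (fun i => Φ i + Ψ i) = mean Q Φ + mean Q Ψ := by
  simp only [mean, mul_add]
  exact finsum_add_distrib (Set.toFinite _) (Set.toFinite _)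

lemma mean_sub (Q Φ Ψ : I → ℝ) : mean Q (fun i => Φ i - Ψ i) = mean Q Φ - mean Q Ψ := by
  simp only [sub_eq_add_neg, mean_add, mean_neg]

lemma IsDist.mean_mono {Q Φ Ψ : I → ℝ} (hQ : IsDist Q) (h : ∀ i, Q i ≠ 0 → Φ i ≤ Ψ i) :
    mean Q Φ ≤ mean Q Ψ := by
  rw [← sub_nonneg, ← mean_sub]
  exact hQ.mean_nonneg fun i hi => sub_nonneg.2 (h i hi)

lemma mean_comm [Finite J] (P : I → ℝ) (Q : J → ℝ) (Φ : I → J → ℝ) :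
    mean P (fun i => mean Q fun j => Φ i j) = mean Q fun j => mean P fun i => Φ i j := by
  have := Fintype.ofFinite I
  have := Fintype.ofFinite J
  simp only [mean_eq_sum, Finset.mul_sum]
  rw [Finset.sum_comm]
  simp only [mul_left_comm]

lemma eq_of_forall_mean_eq {P Q : I → ℝ} (h : ∀ Φ : I → ℝ, mean P Φ = mean Q Φ) : P = Q := by
  classical
  have := Fintype.ofFinite I
  funext i
  simpa [mean_eq_sum, Pi.single_apply] using h (Pi.single i 1)

end Mean

/-! ### Laws of random variables -/

section Push

variable {A B C D : Type*}

lemma isDist_iff_mem_stdSimplex [Fintype A] {p : A → ℝ} : IsDist p ↔ p ∈ stdSimplex ℝ A := by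
  rw [IsDist, finsum_eq_sum_of_fintype]
  rfl

lemma IsDist.exists_ne_zero {p : A → ℝ} (hp : IsDist p) : ∃ a, p a ≠ 0 := by
  by_contra! h
  simpa [h] using hp.2

lemma push_apply [Fintype A] [DecidableEq B] (f : A → B) (p : A → ℝ) (b : B) :
    push f p b = ∑ a with f a = b, p a := by
  rw [push, finsum_mem_eq_sum_of_inter_support_eq]
  ext
  simp

lemma push_equiv (e : A ≃ B) (p : A → ℝ) : push e p = fun b => p (e.symm b) := by
  funext b
  rw [push, show e ⁻¹' {b} = {e.symm b} by ext; simp [Equiv.eq_symm_apply],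
    finsum_mem_singleton]

lemma push_id (p : A → ℝ) : push (fun a => a) p = p := push_equiv (Equiv.refl A) p

variable [Finite A]

lemma IsDist.push_le_push {p : A → ℝ} (hp : IsDist p) {f : A → B} {g : A → C} {a : A}
    (h : ∀ a', p a' ≠ 0 → f a' = f a → g a' = g a) : push f p (f a) ≤ push g p (g a) := by
  classical
  have := Fintype.ofFinite A
  simp only [push_apply, Finset.sum_filter]
  refine Finset.sum_le_sum fun a' _ => ?_
  have h0 := hp.1 a'
  by_cases ha' : p a' = 0
  · simp [ha']
  · split_ifs with hf hg hg
    exacts [le_rfl, absurd (h a' ha' hf) hg, h0, le_rfl]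

lemma IsDist.le_push {p : A → ℝ} (hp : IsDist p) (f : A → B) (a : A) : p a ≤ push f p (f a) := by
  simpa only [push_id] using hp.push_le_push (f := fun a => a) fun _ _ h => congrArg f h

lemma IsDist.push_pos {p : A → ℝ} (hp : IsDist p) (f : A → B) {a : A} (ha : p a ≠ 0) :
    0 < push f p (f a) :=
  ((hp.1 a).lt_of_ne' ha).trans_le (hp.le_push f a)

variable [Finite B] [Finite C] [Finite D]

lemma mean_push (f : A → B) (p : A → ℝ) (Φ : B → ℝ) :
    mean (push f p) Φ = mean p fun a => Φ (f a) := by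
  classical
  have := Fintype.ofFinite A
  have := Fintype.ofFinite B
  simp only [mean_eq_sum, push_apply, Finset.sum_mul]
  rw [← Finset.sum_fiberwise Finset.univ f]
  refine Finset.sum_congr rfl fun b _ => Finset.sum_congr rfl fun a ha => ?_
  rw [(Finset.mem_filter.1 ha).2]

lemma mean_prodDist (p : A → ℝ) (q : B → ℝ) (Φ : A × B → ℝ) :
    mean (prodDist p q) Φ = mean p fun a => mean q fun b => Φ (a, b) := by
  have := Fintype.ofFinite A
  have := Fintype.ofFinite B
  simp only [mean_eq_sum, prodDist, Fintype.sum_prod_type, Finset.mul_sum, mul_assoc]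

lemma push_push (g : B → C) (f : A → B) (p : A → ℝ) :
    push g (push f p) = push (fun a => g (f a)) p :=
  eq_of_forall_mean_eq fun Φ => by simp only [mean_push]

lemma push_prodDist_map (f : A → C) (g : B → D) (p : A → ℝ) (q : B → ℝ) :
    push (fun z => (f z.1, g z.2)) (prodDist p q) = prodDist (push f p) (push g q) :=
  eq_of_forall_mean_eq fun Φ => by simp only [mean_push, mean_prodDist]

protected lemma IsDist.push {p : A → ℝ} (hp : IsDist p) (f : A → B) : IsDist (push f p) := by
  refine ⟨fun b => finsum_nonneg fun a => finsum_nonneg fun _ => hp.1 a, ?_⟩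
  simpa [mean, hp.2] using mean_push f p fun _ => 1

protected lemma IsDist.prodDist {p : A → ℝ} {q : B → ℝ} (hp : IsDist p) (hq : IsDist q) :
    IsDist (prodDist p q) := by
  refine ⟨fun z => mul_nonneg (hp.1 _) (hq.1 _), ?_⟩
  have h := mean_prodDist p q fun _ => 1
  simp only [hq.mean_const, hp.mean_const] at h
  simpa [mean] using h

lemma push_fst_prodDist (p : A → ℝ) {q : B → ℝ} (hq : IsDist q) :
    push Prod.fst (prodDist p q) = p :=
  eq_of_forall_mean_eq fun Φ => by simp only [mean_push, mean_prodDist, hq.mean_const]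

lemma push_snd_prodDist {p : A → ℝ} (hp : IsDist p) (q : B → ℝ) :
    push Prod.snd (prodDist p q) = q :=
  eq_of_forall_mean_eq fun Φ => by simp only [mean_push, mean_prodDist, hp.mean_const]

end Push

/-! ### Conditioning -/

section Fiber

variable {A B T : Type*} [Finite T]

lemma push_snd_apply [Fintype A] (r : A × T → ℝ) (t : T) :
    push Prod.snd r t = ∑ a, r (a, t) := by
  classical
  have := Fintype.ofFinite T
  rw [push_apply, Finset.sum_filter, Fintype.sum_prod_type]
  simp

variable [Finite A] [Finite B]

lemma IsDist.eq_zero_of_push_snd_eq_zero {r : A × T → ℝ} (hr : IsDist r) {t : T}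
    (ht : push Prod.snd r t = 0) (a : A) : r (a, t) = 0 :=
  le_antisymm (ht ▸ hr.le_push Prod.snd (a, t)) (hr.1 _)

lemma IsDist.push_snd_mul_fiber {r : A × T → ℝ} (hr : IsDist r) (a : A) (t : T) :
    push Prod.snd r t * fiber r t a = r (a, t) :=
  mul_div_cancel_of_imp' fun ht => hr.eq_zero_of_push_snd_eq_zero ht a

protected lemma IsDist.fiber {r : A × T → ℝ} (hr : IsDist r) {t : T}
    (ht : push Prod.snd r t ≠ 0) : IsDist (fiber r t) := by
  have := Fintype.ofFinite A
  refine ⟨fun a => div_nonneg (hr.1 _) ((hr.push _).1 t), ?_⟩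
  rw [finsum_eq_sum_of_fintype]
  simp only [fiber, ← Finset.sum_div, ← push_snd_apply]
  exact div_self ht

lemma IsDist.mean_fiber {r : A × T → ℝ} (hr : IsDist r) (Φ : A × T → ℝ) :
    mean (push Prod.snd r) (fun t => mean (fiber r t) fun a => Φ (a, t)) = mean r Φ := by
  have := Fintype.ofFinite A
  have := Fintype.ofFinite T
  simp only [mean_eq_sum, Finset.mul_sum, ← mul_assoc, hr.push_snd_mul_fiber]
  rw [Finset.sum_comm, Fintype.sum_prod_type]

lemma push_fiber (f : A → B) (r : A × T → ℝ) (t : T) :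
    push f (fiber r t) = fiber (push (fun z => (f z.1, z.2)) r) t := by
  classical
  have := Fintype.ofFinite A
  have := Fintype.ofFinite T
  funext b
  rw [fiber, push_push, push_apply, push_apply]
  simp [fiber, Finset.sum_filter, Fintype.sum_prod_type, Prod.ext_iff, ← Finset.sum_div, ite_and]

/-- The law of `((X, Y), T)` when `X` and `Y` are conditionally independent given `T`, where `r₁` is
the law of `(X, T)` and `r₂` the law of `(Y, T)`. -/
def condProd (r₁ : A × T → ℝ) (r₂ : B × T → ℝ) : (A × B) × T → ℝ :=
  fun z => r₁ (z.1.1, z.2) * r₂ (z.1.2, z.2) / push Prod.snd r₁ z.2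

section CondProd

variable {r₁ : A × T → ℝ} {r₂ : B × T → ℝ}

lemma mean_condProd (h : push Prod.snd r₂ = push Prod.snd r₁) (Φ : (A × B) × T → ℝ) :
    mean (condProd r₁ r₂) Φ = mean (push Prod.snd r₁) fun t =>
      mean (prodDist (fiber r₁ t) (fiber r₂ t)) fun z => Φ (z, t) := by
  have := Fintype.ofFinite A
  have := Fintype.ofFinite B
  have := Fintype.ofFinite T
  simp only [mean_eq_sum, Finset.mul_sum]
  rw [Fintype.sum_prod_type_right]
  refine Finset.sum_congr rfl fun t _ => Finset.sum_congr rfl fun z _ => ?_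
  rw [condProd, prodDist, fiber, fiber, h]
  rcases eq_or_ne (push Prod.snd r₁ t) 0 with ht | ht
  · simp [ht]
  · field_simp

variable (h₁ : IsDist r₁) (h₂ : IsDist r₂) (h : push Prod.snd r₂ = push Prod.snd r₁)
include h₁ h₂ h

lemma push_left_condProd : push (fun z => (z.1.1, z.2)) (condProd r₁ r₂) = r₁ :=
  eq_of_forall_mean_eq fun Φ => by
    rw [mean_push, mean_condProd h, ← h₁.mean_fiber]
    refine mean_congr fun t ht => ?_
    simp only [mean_prodDist, (h₂.fiber (h ▸ ht)).mean_const]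

lemma push_right_condProd : push (fun z => (z.1.2, z.2)) (condProd r₁ r₂) = r₂ :=
  eq_of_forall_mean_eq fun Φ => by
    rw [mean_push, mean_condProd h, ← h₂.mean_fiber, h]
    refine mean_congr fun t ht => ?_
    simp only [mean_prodDist, (h₁.fiber ht).mean_const]

lemma push_comp_left_condProd {C : Type*} [Finite C] (f : A × T → C) :
    push (fun z => f (z.1.1, z.2)) (condProd r₁ r₂) = push f r₁ := by
  rw [← push_push f fun z : (A × B) × T => (z.1.1, z.2), push_left_condProd h₁ h₂ h]

lemma push_comp_right_condProd {C : Type*} [Finite C] (f : B × T → C) :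
    push (fun z => f (z.1.2, z.2)) (condProd r₁ r₂) = push f r₂ := by
  rw [← push_push f fun z : (A × B) × T => (z.1.2, z.2), push_right_condProd h₁ h₂ h]

lemma push_snd_condProd : push Prod.snd (condProd r₁ r₂) = push Prod.snd r₁ := by
  simpa only using push_comp_left_condProd h₁ h₂ h Prod.snd

lemma fiber_condProd (t : T) :
    fiber (condProd r₁ r₂) t = prodDist (fiber r₁ t) (fiber r₂ t) := by
  funext z
  rw [fiber, prodDist, fiber, fiber, push_snd_condProd h₁ h₂ h, condProd, h, div_mul_div_comm,
    div_div]

protected lemma IsDist.condProd : IsDist (condProd r₁ r₂) := by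
  refine ⟨fun z => div_nonneg (mul_nonneg (h₁.1 _) (h₂.1 _)) ((h₁.push _).1 _), ?_⟩
  have hm := mean_push (fun z => (z.1.1, z.2)) (condProd r₁ r₂) fun _ => 1
  rw [push_left_condProd h₁ h₂ h, h₁.mean_const] at hm
  simpa [mean] using hm.symm

end CondProd

end Fiber

/-! ### Entropy -/

section Entropy

variable {A B T Ω : Type*}

lemma ent_eq_mean (p : A → ℝ) : ent p = mean p fun a => -log (p a) :=
  finsum_congr fun a => by rw [negMulLog, neg_mul, mul_neg]

lemma IsDist.le_one {p : A → ℝ} [Finite A] (hp : IsDist p) (a : A) : p a ≤ 1 := by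
  have := Fintype.ofFinite A
  rw [← hp.2, finsum_eq_sum_of_fintype]
  exact Finset.single_le_sum (fun c _ => hp.1 c) (Finset.mem_univ a)

lemma condEnt_eq_mean (r : A × T → ℝ) :
    condEnt r = mean (push Prod.snd r) fun t => ent (fiber r t) :=
  rfl

variable [Finite A] [Finite B] [Finite T] [Finite Ω]

lemma IsDist.ent_nonneg {p : A → ℝ} (hp : IsDist p) : 0 ≤ ent p :=
  finsum_nonneg fun a => negMulLog_nonneg (hp.1 a) (hp.le_one a)

lemma IsDist.condEnt_nonneg {r : A × T → ℝ} (hr : IsDist r) : 0 ≤ condEnt r :=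
  (hr.push Prod.snd).mean_nonneg fun _ ht => (hr.fiber ht).ent_nonneg

lemma ent_push (X : Ω → A) (P : Ω → ℝ) : H[X; P] = mean P fun ω => -log (push X P (X ω)) := by
  rw [ent_eq_mean, mean_push]

lemma IsDist.ent_le_mean_neg_log {p q : A → ℝ} (hp : IsDist p) (hq : IsDist q)
    (h : ∀ a, p a ≠ 0 → q a ≠ 0) : ent p ≤ mean p fun a => -log (q a) := by
  have := Fintype.ofFinite A
  have key : mean p (fun a => log (q a) - log (p a)) ≤ mean p fun a => q a / p a - 1 :=
    hp.mean_mono fun a ha => by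
      rw [← log_div (h a ha) ha]
      exact log_le_sub_one_of_pos (div_pos ((hq.1 a).lt_of_ne' (h a ha)) ((hp.1 a).lt_of_ne' ha))
  have hle : mean p (fun a => q a / p a) ≤ 1 := by
    rw [← hq.2, finsum_eq_sum_of_fintype, mean_eq_sum]
    refine Finset.sum_le_sum fun a _ => ?_
    rcases eq_or_ne (p a) 0 with ha | ha
    · simpa [ha] using hq.1 a
    · rw [mul_div_cancel₀ _ ha]
  rw [mean_sub, mean_sub, hp.mean_const] at key
  rw [ent_eq_mean, mean_neg, mean_neg]
  linarith

lemma IsDist.ent_push_le {P : Ω → ℝ} (hP : IsDist P) {X : Ω → A} {Y : Ω → B}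
    (h : ∀ ω ω', P ω ≠ 0 → P ω' ≠ 0 → X ω = X ω' → Y ω = Y ω') : H[Y; P] ≤ H[X; P] := by
  rw [ent_push, ent_push]
  refine hP.mean_mono fun ω hω => neg_le_neg (log_le_log (hP.push_pos X hω) ?_)
  exact hP.push_le_push fun ω' hω' hX => h ω' ω hω' hω hX

lemma IsDist.ent_push_congr {P : Ω → ℝ} (hP : IsDist P) {X : Ω → A} {Y : Ω → B}
    (h : ∀ ω ω', P ω ≠ 0 → P ω' ≠ 0 → (X ω = X ω' ↔ Y ω = Y ω')) : H[X; P] = H[Y; P] :=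
  le_antisymm (hP.ent_push_le fun ω ω' hω hω' => (h ω ω' hω hω').2)
    (hP.ent_push_le fun ω ω' hω hω' => (h ω ω' hω hω').1)

lemma IsDist.ent_push_le_ent {p : A → ℝ} (hp : IsDist p) (f : A → B) :
    ent (push f p) ≤ ent p := by
  simpa only [push_id] using hp.ent_push_le (X := fun a => a) fun _ _ _ _ h => congrArg f h

lemma IsDist.ent_prodDist {p : A → ℝ} {q : B → ℝ} (hp : IsDist p) (hq : IsDist q) :
    ent (prodDist p q) = ent p + ent q := by
  rw [ent_eq_mean, mean_congr (Ψ := fun z => -log (p z.1) + -log (q z.2)) fun z hz => by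
    rw [prodDist, log_mul (left_ne_zero_of_mul hz) (right_ne_zero_of_mul hz), neg_add]]
  simp only [mean_prodDist, mean_add, hp.mean_const, hq.mean_const, ent_eq_mean]

lemma IsDist.condEnt_eq {r : A × T → ℝ} (hr : IsDist r) :
    condEnt r = ent r - ent (push Prod.snd r) := by
  have hlog : mean r (fun z => -log (fiber r z.2 z.1)) =
      mean r fun z => -log (r z) - -log (push Prod.snd r z.2) :=
    mean_congr fun z hz => by
      rw [fiber, log_div hz (hr.push_pos Prod.snd hz).ne']
      ring
  rw [mean_sub, ← ent_eq_mean, ← ent_push, ← hr.mean_fiber] at hlog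
  simpa only [condEnt_eq_mean, ent_eq_mean] using hlog

lemma IsDist.ent_condProd {r₁ : A × T → ℝ} {r₂ : B × T → ℝ} (h₁ : IsDist r₁) (h₂ : IsDist r₂)
    (h : push Prod.snd r₂ = push Prod.snd r₁) :
    ent (condProd r₁ r₂) = ent r₁ + ent r₂ - ent (push Prod.snd r₁) := by
  have hcond : condEnt (condProd r₁ r₂) = condEnt r₁ + condEnt r₂ := by
    simp only [condEnt_eq_mean, fiber_condProd h₁ h₂ h, push_snd_condProd h₁ h₂ h, h, ← mean_add]
    exact mean_congr fun t ht => (h₁.fiber ht).ent_prodDist (h₂.fiber (h ▸ ht))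
  rw [(h₁.condProd h₂ h).condEnt_eq, h₁.condEnt_eq, h₂.condEnt_eq,
    push_snd_condProd h₁ h₂ h, h] at hcond
  linarith

lemma IsDist.ent_add_ent_push_snd_le {r : (A × B) × T → ℝ} (hr : IsDist r) :
    ent r + ent (push Prod.snd r) ≤
      ent (push (fun z => (z.1.1, z.2)) r) + ent (push (fun z => (z.1.2, z.2)) r) := by
  set r₀ := push Prod.snd r
  set r₁ := push (fun z => (z.1.1, z.2)) r with hr₁
  set r₂ := push (fun z => (z.1.2, z.2)) r with hr₂
  have hT₁ : push Prod.snd r₁ = r₀ := push_push ..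
  have hT₂ : push Prod.snd r₂ = push Prod.snd r₁ := by rw [hr₁, hr₂, push_push, push_push]
  have h₀ : ∀ z, r z ≠ 0 → r₀ z.2 ≠ 0 := fun z hz => (hr.push_pos _ hz).ne'
  have h₁ : ∀ z, r z ≠ 0 → r₁ (z.1.1, z.2) ≠ 0 := fun z hz => (hr.push_pos _ hz).ne'
  have h₂ : ∀ z, r z ≠ 0 → r₂ (z.1.2, z.2) ≠ 0 := fun z hz => (hr.push_pos _ hz).ne'
  have gibbs := hr.ent_le_mean_neg_log ((hr.push _).condProd (hr.push _) hT₂) fun z hz =>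
    div_ne_zero (mul_ne_zero (h₁ z hz) (h₂ z hz)) (hT₁ ▸ h₀ z hz)
  have hlog : mean r (fun z => -log (condProd r₁ r₂ z)) =
      mean r fun z => -log (r₁ (z.1.1, z.2)) + -log (r₂ (z.1.2, z.2)) - -log (r₀ z.2) :=
    mean_congr fun z hz => by
      rw [condProd, hT₁, log_div (mul_ne_zero (h₁ z hz) (h₂ z hz)) (h₀ z hz),
        log_mul (h₁ z hz) (h₂ z hz)]
      ring
  have e₀ : ent r₀ = mean r fun z => -log (r₀ z.2) := ent_push ..
  have e₁ : ent r₁ = mean r fun z => -log (r₁ (z.1.1, z.2)) := ent_push ..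
  have e₂ : ent r₂ = mean r fun z => -log (r₂ (z.1.2, z.2)) := ent_push ..
  rw [mean_sub, mean_add, ← e₀, ← e₁, ← e₂] at hlog
  linarith

lemma IsDist.ent_submodular {P : Ω → ℝ} (hP : IsDist P) (X : Ω → A) (Y : Ω → B) (Z : Ω → T) :
    H[fun ω => ((X ω, Y ω), Z ω); P] + H[Z; P] ≤
      H[fun ω => (X ω, Z ω); P] + H[fun ω => (Y ω, Z ω); P] := by
  simpa only [push_push] using (hP.push fun ω => ((X ω, Y ω), Z ω)).ent_add_ent_push_snd_le

lemma IsDist.ent_pair_le {P : Ω → ℝ} (hP : IsDist P) (X : Ω → A) (Y : Ω → B) :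
    H[fun ω => (X ω, Y ω); P] ≤ H[X; P] + H[Y; P] := by
  have h := hP.ent_submodular X Y fun _ => ()
  have h₀ := (hP.push fun _ => ()).ent_nonneg
  have hXY := hP.ent_push_le (X := fun ω => ((X ω, Y ω), ())) (Y := fun ω => (X ω, Y ω)) (by simp)
  have hX := hP.ent_push_le (X := X) (Y := fun ω => (X ω, ())) (by simp)
  have hY := hP.ent_push_le (X := Y) (Y := fun ω => (Y ω, ())) (by simp)
  linarith

end Entropy

/-! ### Sums of independent random variables -/

section Conv

variable {G H A B T U : Type*} [AddCommGroup G]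

lemma sCond_eq_mean (r₁ : G × T → ℝ) (r₂ : G × U → ℝ) :
    sCond r₁ r₂ = mean (push Prod.snd r₁) fun t => mean (push Prod.snd r₂) fun u =>
      sDouble (fiber r₁ t) (fiber r₂ u) := by
  simp only [sCond, mean, mul_finsum, mul_assoc]

variable [Finite G] [AddCommGroup H] [Finite H] [Finite A] [Finite B] [Finite T] [Finite U]

lemma mean_conv (p q Φ : G → ℝ) :
    mean (conv p q) Φ = mean p fun x => mean q fun y => Φ (x + y) := by
  have := Fintype.ofFinite G
  simp only [mean_eq_sum, conv, finsum_eq_sum_of_fintype, Finset.sum_mul, Finset.mul_sum]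
  rw [Finset.sum_comm]
  refine Finset.sum_congr rfl fun x _ => ?_
  rw [← Equiv.sum_comp (Equiv.addLeft x)]
  simp [mul_assoc]

lemma conv_eq_push (p q : G → ℝ) : conv p q = push (fun z => z.1 + z.2) (prodDist p q) :=
  eq_of_forall_mean_eq fun Φ => by simp only [mean_conv, mean_push, mean_prodDist]

lemma conv_push_push (f : A → G) (g : B → G) (p : A → ℝ) (q : B → ℝ) :
    conv (push f p) (push g q) = push (fun z => f z.1 + g z.2) (prodDist p q) :=
  eq_of_forall_mean_eq fun Φ => by simp only [mean_conv, mean_push, mean_prodDist]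

protected lemma IsDist.conv {p q : G → ℝ} (hp : IsDist p) (hq : IsDist q) : IsDist (conv p q) :=
  conv_eq_push p q ▸ (hp.prodDist hq).push _

lemma conv_comm (p q : G → ℝ) : conv p q = conv q p :=
  eq_of_forall_mean_eq fun Φ => by simp only [mean_conv, mean_comm p q, add_comm]

lemma push_conv (f : G →+ H) (p q : G → ℝ) : push f (conv p q) = conv (push f p) (push f q) :=
  eq_of_forall_mean_eq fun Φ => by simp only [mean_conv, mean_push, map_add]

lemma IsDist.ent_conv_le {p q : G → ℝ} (hp : IsDist p) (hq : IsDist q) :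
    ent (conv p q) ≤ ent p + ent q := by
  rw [conv_eq_push, ← hp.ent_prodDist hq]
  exact (hp.prodDist hq).ent_push_le_ent _

lemma IsDist.ent_le_ent_conv {p q : G → ℝ} (hp : IsDist p) (hq : IsDist q) :
    ent p ≤ ent (conv p q) := by
  have hP := hp.prodDist hq
  have hpair := hP.ent_pair_le (fun z => z.1 + z.2) Prod.snd
  have hcongr := hP.ent_push_congr (X := fun z => z) (Y := fun z => (z.1 + z.2, z.2))
    fun ⟨_, _⟩ ⟨_, _⟩ _ _ => by
      simp only [Prod.mk.injEq]; grind
  rw [push_id, hp.ent_prodDist hq] at hcongr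
  rw [← conv_eq_push, push_snd_prodDist hp] at hpair
  linarith

/-- The Kaimanovich–Vershik inequality. -/
lemma IsDist.ent_conv_conv_le {p q r : G → ℝ} (hp : IsDist p) (hq : IsDist q) (hr : IsDist r) :
    ent (conv p (conv q r)) + ent q ≤ ent (conv p q) + ent (conv q r) := by
  have hP := hp.prodDist (hq.prodDist hr)
  set P := prodDist p (prodDist q r)
  have hsub := hP.ent_submodular Prod.fst (fun z => z.2.2) fun z => z.1 + (z.2.1 + z.2.2)
  have hsum : push (fun z => z.1 + (z.2.1 + z.2.2)) P = conv p (conv q r) :=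
    eq_of_forall_mean_eq fun Φ => by simp only [P, mean_push, mean_prodDist, mean_conv]
  have hall := hP.ent_push_congr (X := fun z => z)
    (Y := fun z => ((z.1, z.2.2), z.1 + (z.2.1 + z.2.2))) fun ⟨_, _, _⟩ ⟨_, _, _⟩ _ _ => by
      simp only [Prod.mk.injEq]; grind
  have hleft := hP.ent_push_congr (X := fun z => (z.1, z.2.1 + z.2.2))
    (Y := fun z => (z.1, z.1 + (z.2.1 + z.2.2))) fun ⟨_, _, _⟩ ⟨_, _, _⟩ _ _ => by
      simp only [Prod.mk.injEq]; grind
  have hright := hP.ent_push_congr (X := fun z => (z.1 + z.2.1, z.2.2))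
    (Y := fun z => (z.2.2, z.1 + (z.2.1 + z.2.2))) fun ⟨_, _, _⟩ ⟨_, _, _⟩ _ _ => by
      simp only [Prod.mk.injEq]; grind
  have hleft_law : push (fun z => (z.1, z.2.1 + z.2.2)) P = prodDist p (conv q r) :=
    eq_of_forall_mean_eq fun Φ => by simp only [P, mean_push, mean_prodDist, mean_conv]
  have hright_law : push (fun z => (z.1 + z.2.1, z.2.2)) P = prodDist (conv p q) r :=
    eq_of_forall_mean_eq fun Φ => by simp only [P, mean_push, mean_prodDist, mean_conv]
  rw [push_id, hp.ent_prodDist (hq.prodDist hr), hq.ent_prodDist hr] at hall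
  rw [hleft_law, hp.ent_prodDist (hq.conv hr)] at hleft
  rw [hright_law, (hp.conv hq).ent_prodDist hr] at hright
  rw [hsum] at hsub
  linarith

/-- Ruzsa's triangle inequality. -/
lemma IsDist.ent_conv_triangle [Module (ZMod 2) G] {p q r : G → ℝ} (hp : IsDist p) (hq : IsDist q)
    (hr : IsDist r) : ent (conv p q) + ent r ≤ ent (conv p r) + ent (conv q r) := by
  have hP := hp.prodDist (hq.prodDist hr)
  set P := prodDist p (prodDist q r)
  have hsub := hP.ent_submodular (fun z => z.1 + z.2.2) Prod.fst fun z => z.1 + z.2.1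
  have hpair := hP.ent_pair_le (fun z => z.1 + z.2.2) fun z => z.2.1 + z.2.2
  have hall := hP.ent_push_congr (X := fun z => z)
    (Y := fun z => ((z.1 + z.2.2, z.1), z.1 + z.2.1)) fun ⟨_, _, _⟩ ⟨_, _, _⟩ _ _ => by
      simp only [Prod.mk.injEq]; grind
  have hmid := hP.ent_push_congr (X := fun z => (z.1, z.2.1))
    (Y := fun z => (z.1, z.1 + z.2.1)) fun ⟨_, _, _⟩ ⟨_, _, _⟩ _ _ => by
      simp only [Prod.mk.injEq]; grind
  have hle := hP.ent_push_le (X := fun z => (z.1 + z.2.2, z.2.1 + z.2.2))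
    (Y := fun z => (z.1 + z.2.2, z.1 + z.2.1))
    fun ⟨_, _, z⟩ ⟨_, _, z'⟩ _ _ => by
      have := ZModModule.add_self z
      have := ZModModule.add_self z'
      simp only [Prod.mk.injEq]
      grind
  have hlaw : push (fun z => (z.1, z.2.1)) P = prodDist p q :=
    eq_of_forall_mean_eq fun Φ => by simp only [P, mean_push, mean_prodDist, hr.mean_const]
  have hpq : push (fun z => z.1 + z.2.1) P = conv p q :=
    eq_of_forall_mean_eq fun Φ => by
      simp only [P, mean_push, mean_prodDist, mean_conv, hr.mean_const]
  have hpr : push (fun z => z.1 + z.2.2) P = conv p r :=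
    eq_of_forall_mean_eq fun Φ => by
      simp only [P, mean_push, mean_prodDist, mean_conv, hq.mean_const]
  have hqr : push (fun z => z.2.1 + z.2.2) P = conv q r :=
    eq_of_forall_mean_eq fun Φ => by
      simp only [P, mean_push, mean_prodDist, mean_conv, hp.mean_const]
  rw [push_id, hp.ent_prodDist (hq.prodDist hr), hq.ent_prodDist hr] at hall
  rw [hlaw, hp.ent_prodDist hq] at hmid
  rw [hpq] at hsub
  rw [hpr, hqr] at hpair
  linarith

/-- The law of `(X + Y, (U, W))` when `(X, U)` and `(Y, W)` are independent with laws `r₁`, `r₂`. -/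
def condSum (r₁ : G × T → ℝ) (r₂ : G × U → ℝ) : G × T × U → ℝ :=
  push (fun z => (z.1.1 + z.2.1, z.1.2, z.2.2)) (prodDist r₁ r₂)

protected lemma IsDist.condSum {r₁ : G × T → ℝ} {r₂ : G × U → ℝ} (h₁ : IsDist r₁)
    (h₂ : IsDist r₂) : IsDist (condSum r₁ r₂) :=
  (h₁.prodDist h₂).push _

lemma push_snd_condSum (r₁ : G × T → ℝ) (r₂ : G × U → ℝ) :
    push Prod.snd (condSum r₁ r₂) = prodDist (push Prod.snd r₁) (push Prod.snd r₂) := by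
  rw [condSum, push_push, push_prodDist_map]

lemma fiber_condSum (r₁ : G × T → ℝ) (r₂ : G × U → ℝ) (t : T) (u : U) :
    fiber (condSum r₁ r₂) (t, u) = conv (fiber r₁ t) (fiber r₂ u) := by
  set e := Equiv.prodProdProdComm G T G U
  have hfib : fiber (push e (prodDist r₁ r₂)) (t, u) = prodDist (fiber r₁ t) (fiber r₂ u) := by
    have hsnd : push Prod.snd (push e (prodDist r₁ r₂)) =
        prodDist (push Prod.snd r₁) (push Prod.snd r₂) := by
      rw [push_push, ← push_prodDist_map]
      rfl
    funext z
    rw [fiber, hsnd, push_equiv]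
    exact (div_mul_div_comm ..).symm
  rw [conv_eq_push, ← hfib, push_fiber, push_push]
  rfl

lemma condEnt_condSum (r₁ : G × T → ℝ) (r₂ : G × U → ℝ) :
    condEnt (condSum r₁ r₂) = mean (push Prod.snd r₁) fun t => mean (push Prod.snd r₂) fun u =>
      ent (conv (fiber r₁ t) (fiber r₂ u)) := by
  simp only [condEnt_eq_mean, push_snd_condSum, mean_prodDist, fiber_condSum]

lemma IsDist.sCond_eq {r₁ : G × T → ℝ} {r₂ : G × U → ℝ} (h₁ : IsDist r₁) (h₂ : IsDist r₂) :
    sCond r₁ r₂ = condEnt r₁ + condEnt r₂ - condEnt (condSum r₁ r₂) := by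
  rw [sCond_eq_mean, condEnt_condSum]
  simp only [sDouble, mean_add, mean_sub, (h₁.push _).mean_const, (h₂.push _).mean_const,
    condEnt_eq_mean]

end Conv

/-! ### The entropic Balog–Szemerédi–Gowers inequality -/

section BalogSzemerediGowers

variable {G T U Ω : Type*} [AddCommGroup G] [Finite G] [Finite T] [Finite U] [Finite Ω]

lemma IsDist.ent_push_condProd_self {r : (G × G) × U → ℝ} (hr : IsDist r) :
    H[fun z => (z.1.1.1 + z.1.2.2, z.2); condProd r r] = ent (push Prod.snd r) +
      mean (push Prod.snd r) fun c => ent (conv (fiber (push (fun z => (z.1.1, z.2)) r) c)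
        (fiber (push (fun z => (z.1.2, z.2)) r) c)) := by
  have hR := hr.condProd hr rfl
  have hcond := (hR.push fun z => (z.1.1.1 + z.1.2.2, z.2)).condEnt_eq
  have hsnd : push Prod.snd (push (fun z => (z.1.1.1 + z.1.2.2, z.2)) (condProd r r)) =
      push Prod.snd r := by
    rw [push_push, ← push_snd_condProd hr hr rfl]
  have hfiber (c : U) : fiber (push (fun z => (z.1.1.1 + z.1.2.2, z.2)) (condProd r r)) c =
      conv (fiber (push (fun z => (z.1.1, z.2)) r) c)
        (fiber (push (fun z => (z.1.2, z.2)) r) c) := by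
    rw [← push_fiber Prod.fst, ← push_fiber Prod.snd, conv_push_push, ← fiber_condProd hr hr rfl,
      push_fiber]
  rw [condEnt_eq_mean, hsnd] at hcond
  simp only [← hfiber]
  linarith

variable [Module (ZMod 2) G]

lemma IsDist.ent_add_ent_add_le {P : Ω → ℝ} (hP : IsDist P) {A₁ B₁ A₂ B₂ : Ω → G} (S : Ω → T)
    (hAB : ∀ ω, P ω ≠ 0 → A₁ ω + B₁ ω = A₂ ω + B₂ ω) :
    H[fun ω => (((A₁ ω, B₁ ω), (A₂ ω, B₂ ω)), S ω); P] + H[fun ω => (A₁ ω + B₂ ω, S ω); P] +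
        2 * H[S; P] ≤
      H[fun ω => (A₁ ω, S ω); P] + H[fun ω => (B₁ ω, S ω); P] + H[fun ω => (A₂ ω, S ω); P] +
        H[fun ω => (B₂ ω, S ω); P] := by
  have hsub := hP.ent_submodular A₁ B₁ fun ω => (A₁ ω + B₂ ω, S ω)
  have hAB₂ := hP.ent_submodular A₁ B₂ S
  have hBA₂ := hP.ent_submodular B₁ A₂ S
  have hfull := hP.ent_push_le (X := fun ω => ((A₁ ω, B₁ ω), (A₁ ω + B₂ ω, S ω)))
    (Y := fun ω => (((A₁ ω, B₁ ω), (A₂ ω, B₂ ω)), S ω)) fun ω ω' hω hω' => by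
      have := hAB ω hω
      have := hAB ω' hω'
      simp only [Prod.mk.injEq]
      grind
  have hA := hP.ent_push_le (X := fun ω => ((A₁ ω, B₂ ω), S ω))
    (Y := fun ω => (A₁ ω, (A₁ ω + B₂ ω, S ω))) fun ω ω' _ _ => by
      simp only [Prod.mk.injEq]
      grind
  have hswap : ∀ ω, P ω ≠ 0 → A₁ ω + B₂ ω = B₁ ω + A₂ ω := fun ω hω => by
    have := hAB ω hω
    have := ZModModule.add_self (B₁ ω)
    have := ZModModule.add_self (B₂ ω)
    grind
  have hB := hP.ent_push_le (X := fun ω => ((B₁ ω, A₂ ω), S ω))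
    (Y := fun ω => (B₁ ω, (A₁ ω + B₂ ω, S ω))) fun ω ω' hω hω' => by
      simp only [hswap ω hω, hswap ω' hω', Prod.mk.injEq]
      grind
  linarith

lemma IsDist.mean_ent_conv_fiber_le_of_support {r : (G × G) × (G × T) → ℝ} (hr : IsDist r)
    (hsupp : ∀ z, r z ≠ 0 → z.1.1 + z.1.2 = z.2.1) :
    mean (push Prod.snd r) (fun c => ent (conv (fiber (push (fun z => (z.1.1, z.2)) r) c)
        (fiber (push (fun z => (z.1.2, z.2)) r) c))) ≤
      2 * (H[fun z => (z.1.1, z.2.2); r] + H[fun z => (z.1.2, z.2.2); r] - H[fun z => z.2.2; r]) -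
        2 * ent r + H[Prod.snd; r] - H[fun z => z.2.2; r] := by
  have hR := hr.condProd hr rfl
  have hR₁ : ∀ z, condProd r r z ≠ 0 → z.1.1.1 + z.1.1.2 = z.2.1 := fun z hz =>
    hsupp _ (left_ne_zero_of_mul (div_ne_zero_iff.1 hz).1)
  have hR₂ : ∀ z, condProd r r z ≠ 0 → z.1.2.1 + z.1.2.2 = z.2.1 := fun z hz =>
    hsupp _ (right_ne_zero_of_mul (div_ne_zero_iff.1 hz).1)
  have hmain := hR.ent_add_ent_add_le (A₁ := fun z => z.1.1.1) (B₁ := fun z => z.1.1.2)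
    (A₂ := fun z => z.1.2.1) (B₂ := fun z => z.1.2.2) (fun z => z.2.2)
    fun z hz => (hR₁ z hz).trans (hR₂ z hz).symm
  have hA₁ := push_comp_left_condProd hr hr rfl fun z => (z.1.1, z.2.2)
  have hB₁ := push_comp_left_condProd hr hr rfl fun z => (z.1.2, z.2.2)
  have hA₂ := push_comp_right_condProd hr hr rfl fun z => (z.1.1, z.2.2)
  have hB₂ := push_comp_right_condProd hr hr rfl fun z => (z.1.2, z.2.2)
  have hS := push_comp_left_condProd hr hr rfl fun z => z.2.2
  have hZS := push_comp_left_condProd hr hr rfl Prod.snd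
  have hfull := hR.ent_push_le (Y := fun z => z)
    (X := fun z => (((z.1.1.1, z.1.1.2), (z.1.2.1, z.1.2.2)), z.2.2)) fun z z' hz hz' h => by
      have := hR₁ z hz
      have := hR₁ z' hz'
      simp only [Prod.ext_iff] at h ⊢
      grind
  have hsub := hR.ent_submodular (fun z => z.1.1.1 + z.1.2.2) (fun z => z.2.1) fun z => z.2.2
  have hsum := hR.ent_push_le (X := fun z => ((z.1.1.1 + z.1.2.2, z.2.1), z.2.2))
    (Y := fun z => (z.1.1.1 + z.1.2.2, z.2)) fun z z' _ _ => by
      simp only [Prod.ext_iff]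
      grind
  have hcond := hr.ent_push_condProd_self
  rw [push_id, hr.ent_condProd hr rfl] at hfull
  simp only at hA₁ hB₁ hA₂ hB₂ hS hZS
  simp only [hA₁, hB₁, hA₂, hB₂, hS] at hmain
  simp only [hS, hZS, Prod.mk.eta] at hsub
  linarith

lemma IsDist.mean_ent_conv_fiber_le {P : Ω → ℝ} (hP : IsDist P) (A B : Ω → G) (S : Ω → T) :
    mean (push (fun ω => (A ω + B ω, S ω)) P) (fun c =>
        ent (conv (fiber (push (fun ω => (A ω, (A ω + B ω, S ω))) P) c)
          (fiber (push (fun ω => (B ω, (A ω + B ω, S ω))) P) c))) ≤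
      2 * (H[fun ω => (A ω, S ω); P] + H[fun ω => (B ω, S ω); P] - H[S; P]) -
        2 * H[fun ω => ((A ω, B ω), S ω); P] + H[fun ω => (A ω + B ω, S ω); P] - H[S; P] := by
  have hr := hP.push fun ω => ((A ω, B ω), (A ω + B ω, S ω))
  have hmain := hr.mean_ent_conv_fiber_le_of_support fun z hz => by
    obtain ⟨ω, rfl⟩ : ∃ ω, ((A ω, B ω), (A ω + B ω, S ω)) = z := by
      by_contra! h
      exact hz <| finsum_mem_eq_zero_of_forall_eq_zero fun ω hω => absurd hω (h ω)
    rfl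
  have hcongr := hP.ent_push_le (X := fun ω => ((A ω, B ω), (A ω + B ω, S ω)))
    (Y := fun ω => ((A ω, B ω), S ω)) fun ω ω' _ _ => by
      simp only [Prod.mk.injEq]
      tauto
  simp only [push_push] at hmain
  linarith

end BalogSzemerediGowers

/-! ### Two independent copies of a pair -/

section Quad

variable {G : Type*} {p q : G → ℝ}

lemma quad_eq_prodDist (p q : G → ℝ) :
    quad p q = prodDist p (prodDist p (prodDist q q)) := by
  funext z
  simp only [quad, prodDist, mul_assoc]

lemma mean_quad [Finite G] (p q : G → ℝ) (Φ : G × G × G × G → ℝ) :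
    mean (quad p q) Φ = mean p fun x₁ => mean p fun x₂ => mean q fun y₁ => mean q fun y₂ =>
      Φ (x₁, x₂, y₁, y₂) := by
  simp only [quad_eq_prodDist, mean_prodDist]

protected lemma IsDist.quad [Finite G] (hp : IsDist p) (hq : IsDist q) : IsDist (quad p q) :=
  quad_eq_prodDist p q ▸ hp.prodDist (hp.prodDist (hq.prodDist hq))

lemma IsDist.ent_quad [Finite G] (hp : IsDist p) (hq : IsDist q) :
    ent (quad p q) = 2 * (ent p + ent q) := by
  rw [quad_eq_prodDist, hp.ent_prodDist (hp.prodDist (hq.prodDist hq)),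
    hp.ent_prodDist (hq.prodDist hq), hq.ent_prodDist hq]
  ring

variable [AddCommGroup G]

/-- The variable `X₁ + Y₂` on the space of quadruples `(X₁, X₂, Y₁, Y₂)`. -/
def crossSum (z : G × G × G × G) : G := z.1 + z.2.2.2

/-- The variable `X₁ + Y₁` on the space of quadruples `(X₁, X₂, Y₁, Y₂)`. -/
def diagSum (z : G × G × G × G) : G := z.1 + z.2.2.1

/-- The variable `X₁ + X₂ + Y₁ + Y₂` on the space of quadruples `(X₁, X₂, Y₁, Y₂)`. -/
def totalSum (z : G × G × G × G) : G := z.1 + z.2.1 + z.2.2.1 + z.2.2.2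

/-- The joint entropy `H[X₁ + Y₂, X₁ + Y₁, X₁ + X₂ + Y₁ + Y₂]`. -/
def quadEnt (p q : G → ℝ) : ℝ :=
  H[fun z => ((crossSum z, diagSum z), totalSum z); quad p q]

/-- The law of `(A, (A + B, S))` for `A = X₁ + Y₂`, `B = X₁ + Y₁` and `S = X₁ + X₂ + Y₁ + Y₂`. -/
def crossLaw (p q : G → ℝ) : G × G × G → ℝ :=
  push (fun z => (crossSum z, (crossSum z + diagSum z, totalSum z))) (quad p q)

/-- The law of `(B, (A + B, S))` for `A = X₁ + Y₂`, `B = X₁ + Y₁` and `S = X₁ + X₂ + Y₁ + Y₂`. -/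
def diagLaw (p q : G → ℝ) : G × G × G → ℝ :=
  push (fun z => (diagSum z, (crossSum z + diagSum z, totalSum z))) (quad p q)

lemma crossSum_add_diagSum [Module (ZMod 2) G] (z : G × G × G × G) :
    crossSum z + diagSum z = z.2.2.1 + z.2.2.2 := by
  have := ZModModule.add_self z.1
  simp only [crossSum, diagSum]
  grind

lemma totalSum_eq_add [Module (ZMod 2) G] (z : G × G × G × G) :
    totalSum z = z.1 + z.2.1 + (crossSum z + diagSum z) := by
  rw [crossSum_add_diagSum, totalSum, add_assoc]

variable [Finite G]

protected lemma IsDist.jointSum (hp : IsDist p) (hq : IsDist q) : IsDist (jointSum p q) :=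
  (hp.prodDist hq).push _

lemma push_fst_jointSum (p : G → ℝ) (hq : IsDist q) : push Prod.fst (jointSum p q) = p := by
  rw [jointSum, push_push]
  exact push_fst_prodDist p hq

lemma push_snd_jointSum (p q : G → ℝ) : push Prod.snd (jointSum p q) = conv p q := by
  rw [jointSum, push_push, conv_eq_push]

lemma IsDist.condEnt_jointSum (hp : IsDist p) (hq : IsDist q) :
    condEnt (jointSum p q) = ent p + ent q - ent (conv p q) := by
  have hcongr := (hp.prodDist hq).ent_push_congr (X := fun z => (z.1, z.1 + z.2))
    (Y := fun z => z) fun ⟨_, _⟩ ⟨_, _⟩ _ _ => by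
      simp only [Prod.mk.injEq]
      grind
  rw [push_id, hp.ent_prodDist hq] at hcongr
  rw [(hp.jointSum hq).condEnt_eq, push_snd_jointSum, ← hcongr, jointSum]

protected lemma IsDist.crossLaw (hp : IsDist p) (hq : IsDist q) : IsDist (crossLaw p q) :=
  (hp.quad hq).push _

protected lemma IsDist.diagLaw (hp : IsDist p) (hq : IsDist q) : IsDist (diagLaw p q) :=
  (hp.quad hq).push _

lemma push_crossSum (hp : IsDist p) (hq : IsDist q) : push crossSum (quad p q) = conv p q :=
  eq_of_forall_mean_eq fun Φ => by
    simp only [mean_push, mean_quad, mean_conv, crossSum, hp.mean_const, hq.mean_const]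

lemma push_diagSum (hp : IsDist p) (hq : IsDist q) : push diagSum (quad p q) = conv p q :=
  eq_of_forall_mean_eq fun Φ => by
    simp only [mean_push, mean_quad, mean_conv, diagSum, hp.mean_const, hq.mean_const]

lemma push_fst_crossLaw (hp : IsDist p) (hq : IsDist q) :
    push Prod.fst (crossLaw p q) = conv p q := by
  rw [crossLaw, push_push]
  exact push_crossSum hp hq

lemma push_fst_diagLaw (hp : IsDist p) (hq : IsDist q) :
    push Prod.fst (diagLaw p q) = conv p q := by
  rw [diagLaw, push_push]
  exact push_diagSum hp hq

lemma push_totalSum (p q : G → ℝ) :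
    push totalSum (quad p q) = conv (conv p q) (conv p q) :=
  eq_of_forall_mean_eq fun Φ => by
    simp only [mean_push, mean_quad, mean_conv, totalSum, mean_comm q p]
    simp only [add_assoc, add_left_comm]

lemma conv_conv_conv_comm (p q r s : G → ℝ) :
    conv (conv p q) (conv r s) = conv (conv p r) (conv q s) :=
  eq_of_forall_mean_eq fun Φ => by
    simp only [mean_conv, mean_comm q r, add_add_add_comm]

lemma IsDist.ent_crossSum_totalSum (hp : IsDist p) (hq : IsDist q) :
    H[fun z => (crossSum z, totalSum z); quad p q] = 2 * ent (conv p q) := by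
  have hlaw : push (fun z => (crossSum z, z.2.1 + z.2.2.1)) (quad p q) =
      prodDist (conv p q) (conv p q) :=
    eq_of_forall_mean_eq fun Φ => by
      simp only [mean_push, mean_quad, mean_prodDist, mean_conv, crossSum, mean_comm q p]
      exact mean_congr fun _ _ => mean_congr fun _ _ => mean_comm q q _
  have hcongr := (hp.quad hq).ent_push_congr (X := fun z => (crossSum z, totalSum z))
    (Y := fun z => (crossSum z, z.2.1 + z.2.2.1)) fun _ _ _ _ => by
      simp only [crossSum, totalSum, Prod.mk.injEq]
      grind
  rw [hcongr, hlaw, (hp.conv hq).ent_prodDist (hp.conv hq), two_mul]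

lemma IsDist.ent_diagSum_totalSum (hp : IsDist p) (hq : IsDist q) :
    H[fun z => (diagSum z, totalSum z); quad p q] = 2 * ent (conv p q) := by
  have hlaw : push (fun z => (diagSum z, z.2.1 + z.2.2.2)) (quad p q) =
      prodDist (conv p q) (conv p q) :=
    eq_of_forall_mean_eq fun Φ => by
      simp only [mean_push, mean_quad, mean_prodDist, mean_conv, diagSum, mean_comm q p]
  have hcongr := (hp.quad hq).ent_push_congr (X := fun z => (diagSum z, totalSum z))
    (Y := fun z => (diagSum z, z.2.1 + z.2.2.2)) fun _ _ _ _ => by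
      simp only [diagSum, totalSum, Prod.mk.injEq]
      grind
  rw [hcongr, hlaw, (hp.conv hq).ent_prodDist (hp.conv hq), two_mul]

lemma IsDist.ent_crossLaw (hp : IsDist p) (hq : IsDist q) :
    ent (crossLaw p q) = quadEnt p q :=
  (hp.quad hq).ent_push_congr fun _ _ _ _ => by
    simp only [Prod.mk.injEq]
    grind

lemma IsDist.ent_diagLaw (hp : IsDist p) (hq : IsDist q) :
    ent (diagLaw p q) = quadEnt p q :=
  (hp.quad hq).ent_push_congr fun _ _ _ _ => by
    simp only [Prod.mk.injEq]
    grind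

lemma IsDist.condEnt_condSum_jointSum_swap (hp : IsDist p) (hq : IsDist q) :
    condEnt (condSum (jointSum p q) (jointSum q p)) = quadEnt p q - 2 * ent (conv p q) := by
  have hlaw : condSum (jointSum p q) (jointSum q p) =
      push (fun z => (crossSum z, (diagSum z, z.2.1 + z.2.2.2))) (quad p q) :=
    eq_of_forall_mean_eq fun Φ => by
      simp only [condSum, jointSum, mean_push, mean_prodDist, mean_quad, crossSum, diagSum,
        mean_comm p q, add_comm]
  have hcongr := (hp.quad hq).ent_push_congr
    (X := fun z => (crossSum z, (diagSum z, z.2.1 + z.2.2.2)))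
    (Y := fun z => ((crossSum z, diagSum z), totalSum z)) fun _ _ _ _ => by
      simp only [crossSum, diagSum, totalSum, Prod.mk.injEq]
      grind
  rw [((hp.jointSum hq).condSum (hq.jointSum hp)).condEnt_eq, push_snd_condSum, push_snd_jointSum,
    push_snd_jointSum, (hp.conv hq).ent_prodDist (hq.conv hp), conv_comm q p, hlaw, hcongr,
    quadEnt, two_mul]

variable [Module (ZMod 2) G]

lemma IsDist.ent_crossSum_add_diagSum_totalSum (hp : IsDist p) (hq : IsDist q) :
    H[fun z => (crossSum z + diagSum z, totalSum z); quad p q] =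
      ent (conv p p) + ent (conv q q) := by
  have hlaw : push (fun z => (z.2.2.1 + z.2.2.2, z.1 + z.2.1)) (quad p q) =
      prodDist (conv q q) (conv p p) :=
    eq_of_forall_mean_eq fun Φ => by
      simp only [mean_push, mean_quad, mean_prodDist, mean_conv, mean_comm p q]
  have hcongr := (hp.quad hq).ent_push_congr
    (X := fun z => (crossSum z + diagSum z, totalSum z))
    (Y := fun z => (z.2.2.1 + z.2.2.2, z.1 + z.2.1)) fun _ _ _ _ => by
      simp only [crossSum_add_diagSum, totalSum, Prod.mk.injEq]
      grind
  rw [hcongr, hlaw, (hq.conv hq).ent_prodDist (hp.conv hp), add_comm]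

lemma IsDist.condEnt_crossLaw (hp : IsDist p) (hq : IsDist q) :
    condEnt (crossLaw p q) = quadEnt p q - (ent (conv p p) + ent (conv q q)) := by
  rw [(hp.crossLaw hq).condEnt_eq, hp.ent_crossLaw hq, ← hp.ent_crossSum_add_diagSum_totalSum hq,
    crossLaw, push_push]

lemma IsDist.condEnt_diagLaw (hp : IsDist p) (hq : IsDist q) :
    condEnt (diagLaw p q) = quadEnt p q - (ent (conv p p) + ent (conv q q)) := by
  rw [(hp.diagLaw hq).condEnt_eq, hp.ent_diagLaw hq, ← hp.ent_crossSum_add_diagSum_totalSum hq,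
    diagLaw, push_push]

lemma IsDist.quadEnt_add_le (hp : IsDist p) (hq : IsDist q) :
    quadEnt p q + ent (conv (conv p q) (conv p q)) ≤
      2 * ent (conv p q) + (ent (conv p p) + ent (conv q q)) := by
  have h := (hp.quad hq).ent_submodular crossSum (fun z => crossSum z + diagSum z) totalSum
  have hcongr := (hp.quad hq).ent_push_congr
    (X := fun z => ((crossSum z, diagSum z), totalSum z))
    (Y := fun z => ((crossSum z, crossSum z + diagSum z), totalSum z)) fun _ _ _ _ => by
      simp only [Prod.mk.injEq]
      grind
  rw [push_totalSum, hp.ent_crossSum_totalSum hq, hp.ent_crossSum_add_diagSum_totalSum hq] at h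
  rw [quadEnt]
  linarith

lemma IsDist.condEnt_condSum_jointSum_self (hp : IsDist p) (hq : IsDist q) :
    condEnt (condSum (jointSum p p) (jointSum q q)) =
      quadEnt p q - (ent (conv p p) + ent (conv q q)) := by
  have hlaw : condSum (jointSum p p) (jointSum q q) =
      push (fun z => (crossSum z, (z.1 + z.2.1, crossSum z + diagSum z))) (quad p q) :=
    eq_of_forall_mean_eq fun Φ => by
      simp only [condSum, jointSum, mean_push, mean_prodDist, mean_quad, crossSum_add_diagSum]
      refine mean_congr fun _ _ => mean_congr fun _ _ => (mean_comm q q _).trans ?_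
      simp only [crossSum, add_comm]
  have hcongr := (hp.quad hq).ent_push_congr
    (X := fun z => (crossSum z, (z.1 + z.2.1, crossSum z + diagSum z)))
    (Y := fun z => ((crossSum z, diagSum z), totalSum z)) fun z z' _ _ => by
      simp only [totalSum_eq_add, Prod.mk.injEq]
      grind
  rw [((hp.jointSum hp).condSum (hq.jointSum hq)).condEnt_eq, push_snd_condSum, push_snd_jointSum,
    push_snd_jointSum, (hp.conv hp).ent_prodDist (hq.conv hq), hlaw, hcongr, quadEnt]

lemma IsDist.mean_ent_conv_fiber_crossLaw_le (hp : IsDist p) (hq : IsDist q) :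
    mean (push Prod.snd (crossLaw p q)) (fun c =>
        ent (conv (fiber (crossLaw p q) c) (fiber (diagLaw p q) c))) ≤
      8 * ent (conv p q) - 3 * ent (conv (conv p q) (conv p q)) - 2 * quadEnt p q +
        ent (conv p p) + ent (conv q q) := by
  have h := (hp.quad hq).mean_ent_conv_fiber_le crossSum diagSum totalSum
  rw [hp.ent_crossSum_totalSum hq, hp.ent_diagSum_totalSum hq, push_totalSum, ← quadEnt,
    hp.ent_crossSum_add_diagSum_totalSum hq] at h
  rw [crossLaw, push_push, diagLaw]
  linarith

end Quad

/-! ### Sums with one conditioned summand -/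

section Conditioned

variable {A B G T : Type*} [Finite A] [Finite B] [Finite T]

lemma IsDist.condEnt_le {r : A × T → ℝ} (hr : IsDist r) : condEnt r ≤ ent (push Prod.fst r) := by
  have h := hr.ent_pair_le Prod.fst Prod.snd
  have hid : push (fun z => (z.1, z.2)) r = r := push_id r
  rw [hid] at h
  rw [hr.condEnt_eq]
  linarith

lemma IsDist.fiber_prodDist {p : A → ℝ} (hp : IsDist p) (r : B × T → ℝ) (t : T) :
    fiber (push (fun z => ((z.1, z.2.1), z.2.2)) (prodDist p r)) t = prodDist p (fiber r t) := by
  have hsnd : push Prod.snd (push (fun z => ((z.1, z.2.1), z.2.2)) (prodDist p r)) =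
      push Prod.snd r :=
    eq_of_forall_mean_eq fun Φ => by simp only [mean_push, mean_prodDist, hp.mean_const]
  funext z
  rw [fiber, hsnd]
  exact (congrArg (· / _) (congrFun (push_equiv (Equiv.prodAssoc A B T).symm _) _)).trans
    (mul_div_assoc ..)

variable [AddCommGroup G] [Finite G]

lemma IsDist.mean_ent_conv_fiber_right_le {p : G → ℝ} {r : G × T → ℝ} (hp : IsDist p)
    (hr : IsDist r) :
    mean (push Prod.snd r) (fun t => ent (conv p (fiber r t))) ≤
      ent (conv p (push Prod.fst r)) := by
  have h := ((hp.prodDist hr).push fun z => (z.1 + z.2.1, z.2.2)).condEnt_le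
  have hfst : push Prod.fst (push (fun z => (z.1 + z.2.1, z.2.2)) (prodDist p r)) =
      conv p (push Prod.fst r) :=
    eq_of_forall_mean_eq fun Φ => by simp only [mean_push, mean_prodDist, mean_conv]
  have hsnd : push Prod.snd (push (fun z => (z.1 + z.2.1, z.2.2)) (prodDist p r)) =
      push Prod.snd r :=
    eq_of_forall_mean_eq fun Φ => by simp only [mean_push, mean_prodDist, hp.mean_const]
  have hfiber (t : T) : fiber (push (fun z => (z.1 + z.2.1, z.2.2)) (prodDist p r)) t =
      conv p (fiber r t) := by
    rw [conv_eq_push, ← hp.fiber_prodDist, push_fiber, push_push]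
  rwa [condEnt_eq_mean, hfst, hsnd, funext fun t => congrArg ent (hfiber t)] at h

end Conditioned

/-! ### Minimizers of the functional of Gowers, Green, Manners and Tao -/

section Minimizer

variable {G : Type*} [AddCommGroup G] {p₀ q₀ p q : G → ℝ}

/-- The functional `d[X ; Y] + (d[X₀ ; X] + d[Y₀ ; Y]) / 20` of Gowers, Green, Manners and Tao,
as a function of the laws `p` of `X` and `q` of `Y`. -/
def pfrFunctional (p₀ q₀ p q : G → ℝ) : ℝ :=
  dRuzsa p q + 1 / 20 * (dRuzsa p₀ p + dRuzsa q₀ q)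

/-- The pair of laws `(p, q)` minimizes `pfrFunctional p₀ q₀` among all pairs of laws. -/
structure IsPFRMinimizer (p₀ q₀ p q : G → ℝ) : Prop where
  left : IsDist p
  right : IsDist q
  le : ∀ p' q', IsDist p' → IsDist q' → pfrFunctional p₀ q₀ p q ≤ pfrFunctional p₀ q₀ p' q'

lemma mean_pfrFunctional {I : Type*} [Finite I] {Q : I → ℝ} (hQ : IsDist Q) (p₀ q₀ : G → ℝ)
    (f g : I → G → ℝ) :
    mean Q (fun i => pfrFunctional p₀ q₀ (f i) (g i)) =
      mean Q (fun i => ent (conv (f i) (g i))) -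
        mean Q (fun i => ent (f i)) / 2 - mean Q (fun i => ent (g i)) / 2 +
      1 / 20 * (mean Q (fun i => ent (conv p₀ (f i))) - ent p₀ / 2 -
          mean Q (fun i => ent (f i)) / 2 +
        (mean Q (fun i => ent (conv q₀ (g i))) - ent q₀ / 2 -
          mean Q (fun i => ent (g i)) / 2)) := by
  simp only [pfrFunctional, dRuzsa, mean_add, mean_sub, mean_const_mul, div_eq_mul_inv,
    mean_mul_const, hQ.mean_const]

namespace IsPFRMinimizer

lemma le_mean {I : Type*} [Finite I] {Q : I → ℝ} {f g : I → G → ℝ}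
    (h : IsPFRMinimizer p₀ q₀ p q) (hQ : IsDist Q) (hf : ∀ i, Q i ≠ 0 → IsDist (f i))
    (hg : ∀ i, Q i ≠ 0 → IsDist (g i)) :
    pfrFunctional p₀ q₀ p q ≤ mean Q fun i => pfrFunctional p₀ q₀ (f i) (g i) := by
  rw [← hQ.mean_const (pfrFunctional p₀ q₀ p q)]
  exact hQ.mean_mono fun i hi => h.le _ _ (hf i hi) (hg i hi)

lemma dRuzsa_le (h : IsPFRMinimizer p₀ q₀ p q) {p' q' : G → ℝ} (hp' : IsDist p')
    (hq' : IsDist q') :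
    dRuzsa p q ≤ dRuzsa p' q' +
      1 / 20 * (dRuzsa p₀ p' - dRuzsa p₀ p + (dRuzsa q₀ q' - dRuzsa q₀ q)) := by
  have := h.le p' q' hp' hq'
  simp only [pfrFunctional] at this
  linarith

end IsPFRMinimizer

variable [Finite G]

lemma dRuzsa_comm (p q : G → ℝ) : dRuzsa p q = dRuzsa q p := by
  rw [dRuzsa, dRuzsa, conv_comm]
  ring

lemma IsDist.dRuzsa_nonneg (hp : IsDist p) (hq : IsDist q) : 0 ≤ dRuzsa p q := by
  have h₁ := hp.ent_le_ent_conv hq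
  have h₂ := hq.ent_le_ent_conv hp
  rw [conv_comm] at h₂
  rw [dRuzsa]
  linarith

@[fun_prop]
lemma continuous_ent {X A : Type*} [TopologicalSpace X] [Finite A] {f : X → A → ℝ}
    (hf : Continuous f) : Continuous fun x => ent (f x) := by
  have := Fintype.ofFinite A
  simp only [ent, finsum_eq_sum_of_fintype]
  fun_prop

@[fun_prop]
lemma continuous_conv {X : Type*} [TopologicalSpace X] {f g : X → G → ℝ}
    (hf : Continuous f) (hg : Continuous g) : Continuous fun x => conv (f x) (g x) := by
  have := Fintype.ofFinite G
  unfold conv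
  simp only [finsum_eq_sum_of_fintype]
  fun_prop

lemma IsDist.exists_isPFRMinimizer (hp₀ : IsDist p₀) (hq₀ : IsDist q₀) :
    ∃ p q, IsPFRMinimizer p₀ q₀ p q := by
  have := Fintype.ofFinite G
  have hcont : Continuous fun z : (G → ℝ) × (G → ℝ) => pfrFunctional p₀ q₀ z.1 z.2 := by
    unfold pfrFunctional dRuzsa
    fun_prop
  obtain ⟨z, ⟨hz₁, hz₂⟩, hmin⟩ :=
    ((isCompact_stdSimplex ℝ G).prod (isCompact_stdSimplex ℝ G)).exists_isMinOn
      ⟨(p₀, q₀), isDist_iff_mem_stdSimplex.1 hp₀, isDist_iff_mem_stdSimplex.1 hq₀⟩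
      hcont.continuousOn
  exact ⟨z.1, z.2, isDist_iff_mem_stdSimplex.2 hz₁, isDist_iff_mem_stdSimplex.2 hz₂,
    fun p' q' hp' hq' => hmin (a := (p', q'))
      ⟨isDist_iff_mem_stdSimplex.1 hp', isDist_iff_mem_stdSimplex.1 hq'⟩⟩

namespace IsPFRMinimizer

variable {T U : Type*} [Finite T] [Finite U]

lemma le_of_push_snd_eq {r s : G × T → ℝ} (h : IsPFRMinimizer p₀ q₀ p q) (hp₀ : IsDist p₀)
    (hq₀ : IsDist q₀) (hr : IsDist r) (hs : IsDist s) (hrs : push Prod.snd s = push Prod.snd r) :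
    pfrFunctional p₀ q₀ p q ≤
      mean (push Prod.snd r) (fun t => ent (conv (fiber r t) (fiber s t))) -
        condEnt r / 2 - condEnt s / 2 +
      1 / 20 * (ent (conv p₀ (push Prod.fst r)) - ent p₀ / 2 - condEnt r / 2 +
        (ent (conv q₀ (push Prod.fst s)) - ent q₀ / 2 - condEnt s / 2)) := by
  have hmin := h.le_mean (hr.push _) (fun _ => hr.fiber) fun _ ht => hs.fiber (hrs ▸ ht)
  have hr' := hp₀.mean_ent_conv_fiber_right_le hr
  have hs' := hq₀.mean_ent_conv_fiber_right_le hs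
  rw [mean_pfrFunctional (hr.push _)] at hmin
  rw [hrs] at hs'
  rw [condEnt_eq_mean, condEnt_eq_mean, hrs]
  linarith

lemma le_of_condSum {r : G × T → ℝ} {s : G × U → ℝ} (h : IsPFRMinimizer p₀ q₀ p q)
    (hp₀ : IsDist p₀) (hq₀ : IsDist q₀) (hr : IsDist r) (hs : IsDist s) :
    pfrFunctional p₀ q₀ p q ≤
      condEnt (condSum r s) - condEnt r / 2 - condEnt s / 2 +
      1 / 20 * (ent (conv p₀ (push Prod.fst r)) - ent p₀ / 2 - condEnt r / 2 +
        (ent (conv q₀ (push Prod.fst s)) - ent q₀ / 2 - condEnt s / 2)) := by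
  have hQ := (hr.push Prod.snd).prodDist (hs.push Prod.snd)
  have hmin := h.le_mean hQ (f := fun z => fiber r z.1) (g := fun z => fiber s z.2)
    (fun _ hz => hr.fiber (left_ne_zero_of_mul hz)) fun _ hz => hs.fiber (right_ne_zero_of_mul hz)
  have hr' := hp₀.mean_ent_conv_fiber_right_le hr
  have hs' := hq₀.mean_ent_conv_fiber_right_le hs
  rw [mean_pfrFunctional hQ] at hmin
  simp only [mean_prodDist, (hr.push _).mean_const, (hs.push _).mean_const, ← condEnt_eq_mean,
    ← condEnt_condSum] at hmin
  linarith

/-- Minimality is tested on `(X | X + Y)` and an independent copy of `(Y | X + Y)`. -/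
lemma le_quadEnt (h : IsPFRMinimizer p₀ q₀ p q) (hp₀ : IsDist p₀) (hq₀ : IsDist q₀) :
    19 / 20 * dRuzsa p q ≤ quadEnt p q - ent (conv p q) - ent p - ent q := by
  have hmin := h.le_of_condSum hp₀ hq₀ (h.left.jointSum h.right) (h.right.jointSum h.left)
  rw [h.left.condEnt_condSum_jointSum_swap h.right, h.left.condEnt_jointSum h.right,
    h.right.condEnt_jointSum h.left, push_fst_jointSum p h.right, push_fst_jointSum q h.left,
    conv_comm q p] at hmin
  unfold pfrFunctional dRuzsa at *
  linarith

/-- Minimality is tested on `(X₁ + X₂, Y₁ + Y₂)`. -/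
lemma dRuzsa_le_ent_conv_conv (h : IsPFRMinimizer p₀ q₀ p q) (hp₀ : IsDist p₀)
    (hq₀ : IsDist q₀) :
    dRuzsa p q ≤ ent (conv (conv p q) (conv p q)) - (ent (conv p p) + ent (conv q q)) / 2 +
      1 / 40 * (ent (conv p p) + ent (conv q q) - ent p - ent q) := by
  have hmin := h.dRuzsa_le (h.left.conv h.left) (h.right.conv h.right)
  have hp := hp₀.ent_conv_conv_le h.left h.left
  have hq := hq₀.ent_conv_conv_le h.right h.right
  unfold dRuzsa at *
  rw [conv_conv_conv_comm p p] at hmin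
  linarith

/-- Minimality is tested on `(X₁ | X₁ + X₂)` and `(Y₁ | Y₁ + Y₂)`. -/
lemma dRuzsa_le_quadEnt [Module (ZMod 2) G] (h : IsPFRMinimizer p₀ q₀ p q) (hp₀ : IsDist p₀)
    (hq₀ : IsDist q₀) :
    dRuzsa p q ≤ quadEnt p q - (ent (conv p p) + ent (conv q q)) / 2 - ent p - ent q +
      1 / 40 * (ent (conv p p) + ent (conv q q) - ent p - ent q) := by
  have hmin := h.le_of_condSum hp₀ hq₀ (h.left.jointSum h.left) (h.right.jointSum h.right)
  rw [h.left.condEnt_condSum_jointSum_self h.right, h.left.condEnt_jointSum h.left,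
    h.right.condEnt_jointSum h.right, push_fst_jointSum p h.left,
    push_fst_jointSum q h.right] at hmin
  unfold pfrFunctional dRuzsa at *
  linarith

/-- Minimality is tested on `(A | A + B, S)` and `(B | A + B, S)`, where `A = X₁ + Y₂`,
`B = X₁ + Y₁` and `S = X₁ + X₂ + Y₁ + Y₂`, which the entropic Balog–Szemerédi–Gowers inequality
shows to be close to each other. -/
lemma dRuzsa_le_crossLaw [Module (ZMod 2) G] (h : IsPFRMinimizer p₀ q₀ p q) (hp₀ : IsDist p₀)
    (hq₀ : IsDist q₀) :
    dRuzsa p q ≤ 8 * ent (conv p q) - 3 * ent (conv (conv p q) (conv p q)) - 3 * quadEnt p q +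
        2 * (ent (conv p p) + ent (conv q q)) +
      1 / 20 * (2 * ent (conv p q) - (ent p + ent q) / 2 - quadEnt p q +
        ent (conv p p) + ent (conv q q)) := by
  have hsnd : push Prod.snd (diagLaw p q) = push Prod.snd (crossLaw p q) := by
    rw [crossLaw, diagLaw, push_push, push_push]
  have hmin := h.le_of_push_snd_eq hp₀ hq₀ (h.left.crossLaw h.right) (h.left.diagLaw h.right) hsnd
  have hbsg := h.left.mean_ent_conv_fiber_crossLaw_le h.right
  have hp := hp₀.ent_conv_conv_le h.left h.right
  have hq := hq₀.ent_conv_conv_le h.right h.left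
  rw [h.left.condEnt_crossLaw h.right, h.left.condEnt_diagLaw h.right,
    push_fst_crossLaw h.left h.right, push_fst_diagLaw h.left h.right] at hmin
  rw [conv_comm q p] at hq
  unfold pfrFunctional dRuzsa at *
  linarith

lemma dRuzsa_eq_zero [Module (ZMod 2) G] (h : IsPFRMinimizer p₀ q₀ p q) (hp₀ : IsDist p₀)
    (hq₀ : IsDist q₀) : dRuzsa p q = 0 := by
  have h₁ := h.le_quadEnt hp₀ hq₀
  have h₂ := h.dRuzsa_le_ent_conv_conv hp₀ hq₀
  have h₃ := h.dRuzsa_le_quadEnt hp₀ hq₀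
  have h₄ := h.dRuzsa_le_crossLaw hp₀ hq₀
  have ht := h.right.ent_conv_triangle h.right h.left
  rw [conv_comm q p] at ht
  refine le_antisymm ?_ (h.left.dRuzsa_nonneg h.right)
  unfold dRuzsa at *
  linarith

end IsPFRMinimizer

end Minimizer

/-! ### Periods and the equality case of `H[X] ≤ H[X + Y]` -/

section Uniform

variable {A : Type*} {s : Set A}

lemma unifOn_of_mem {a : A} (ha : a ∈ s) : unifOn s a = (Nat.card s : ℝ)⁻¹ :=
  Set.indicator_of_mem ha _

variable [Finite A]

lemma isDist_unifOn (hs : s.Nonempty) : IsDist (unifOn s) := by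
  refine ⟨fun a => Set.indicator_nonneg (fun _ _ => by positivity) a, ?_⟩
  classical
  have := Fintype.ofFinite A
  have := hs.coe_sort
  have hcard : (Nat.card s : ℝ) ≠ 0 := Nat.cast_ne_zero.2 Nat.card_pos.ne'
  have hfilter : Nat.card s = (Finset.univ.filter (· ∈ s)).card := by
    rw [Nat.card_eq_fintype_card, Fintype.card_subtype]
  simp only [finsum_eq_sum_of_fintype, unifOn, Set.indicator_apply]
  rw [← Finset.sum_filter, Finset.sum_const, nsmul_eq_mul, ← hfilter, mul_inv_cancel₀ hcard]

lemma ent_unifOn (hs : s.Nonempty) : ent (unifOn s) = log (Nat.card s) := by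
  rw [ent_eq_mean, mean_congr (Ψ := fun _ => log (Nat.card s)) fun a ha => ?_,
    (isDist_unifOn hs).mean_const]
  rw [unifOn_of_mem (Set.mem_of_indicator_ne_zero ha), log_inv, neg_neg]

lemma IsDist.ent_le_log_card {p : A → ℝ} (hp : IsDist p) (h : ∀ a, p a ≠ 0 → a ∈ s) :
    ent p ≤ log (Nat.card s) := by
  obtain ⟨a₀, ha₀⟩ := hp.exists_ne_zero
  have hs : s.Nonempty := ⟨a₀, h a₀ ha₀⟩
  have := hs.coe_sort
  have hne (a : A) (ha : p a ≠ 0) : unifOn s a ≠ 0 := by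
    rw [unifOn_of_mem (h a ha)]
    exact inv_ne_zero (Nat.cast_ne_zero.2 Nat.card_pos.ne')
  refine (hp.ent_le_mean_neg_log (isDist_unifOn hs) hne).trans_eq ?_
  rw [mean_congr (Ψ := fun _ => log (Nat.card s)) fun a ha => ?_, hp.mean_const]
  rw [unifOn_of_mem (h a ha), log_inv, neg_neg]

end Uniform

section Periods

variable {G : Type*} [AddCommGroup G] {p q : G → ℝ}

/-- The hypothesis forces equality in the Jensen inequality for the strictly concave `negMulLog`. -/
lemma IsDist.apply_sub_eq_conv [Finite G] (hp : IsDist p) (hq : IsDist q)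
    (h : ent (conv q p) ≤ ent p) {y : G} (hy : q y ≠ 0) (z : G) : p (z - y) = conv q p z := by
  have := Fintype.ofFinite G
  have hq1 : ∑ x, q x = 1 := by rw [← finsum_eq_sum_of_fintype, hq.2]
  have hconv (z : G) : conv q p z = ∑ x, q x • p (z - x) := finsum_eq_sum_of_fintype _
  have hjensen (z : G) : ∑ x, q x • negMulLog (p (z - x)) ≤ negMulLog (conv q p z) := by
    rw [hconv]
    exact concaveOn_negMulLog.le_map_sum (fun i _ => hq.1 i) hq1 fun i _ => hp.1 _
  have hent : ∑ z, ∑ x, q x • negMulLog (p (z - x)) = ent p := by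
    rw [Finset.sum_comm, ← hq.mean_const (ent p), mean_eq_sum]
    refine Finset.sum_congr rfl fun x _ => ?_
    rw [← Finset.smul_sum, ent, finsum_eq_sum_of_fintype, smul_eq_mul]
    exact congrArg _ ((Equiv.subRight x).sum_comp fun z => negMulLog (p z))
  have heq : ∑ z, ∑ x, q x • negMulLog (p (z - x)) = ∑ z, negMulLog (conv q p z) := by
    refine le_antisymm (Finset.sum_le_sum fun z _ => hjensen z) ?_
    rwa [hent, ← finsum_eq_sum_of_fintype]
  have heq_z := (Finset.sum_eq_sum_iff_of_le fun z _ => hjensen z).1 heq z (Finset.mem_univ z)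
  rw [hconv] at heq_z ⊢
  exact (strictConcaveOn_negMulLog.map_sum_eq_iff' (fun i _ => hq.1 i) hq1 fun i _ => hp.1 _).1
    heq_z.symm y (Finset.mem_univ y) hy

variable [Module (ZMod 2) G]

/-- The subspace of periods of a function, the largest subspace under which it is invariant. -/
def periods (p : G → ℝ) : Submodule (ZMod 2) G :=
  AddSubgroup.toZModSubmodule 2
    { carrier := {v | ∀ z, p (z + v) = p z}
      zero_mem' := fun z => by rw [add_zero]
      add_mem' := fun ha hb z => by rw [← add_assoc, hb, ha]
      neg_mem' := fun ha z => by rw [← ha, neg_add_cancel_right] }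

lemma mem_periods {v : G} : v ∈ periods p ↔ ∀ z, p (z + v) = p z := by
  rw [periods, AddSubgroup.mem_toZModSubmodule]
  rfl

lemma periods_le_periods_conv (p q : G → ℝ) : periods q ≤ periods (conv p q) := fun v hv z =>
  finsum_congr fun x => by rw [add_sub_right_comm, mem_periods.1 hv]

instance [Finite G] (V : Submodule (ZMod 2) G) : Finite (G ⧸ V) :=
  Finite.of_surjective V.mkQ V.mkQ_surjective

lemma card_preimage_mkQ (V : Submodule (ZMod 2) G) (t : Set (G ⧸ V)) :
    Nat.card (V.mkQ ⁻¹' t) = Nat.card V * Nat.card t := by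
  rw [← Nat.card_prod]
  exact Nat.card_congr (QuotientAddGroup.preimageMkEquivAddSubgroupProdSet V.toAddSubgroup t)

lemma card_fiber_mkQ (V : Submodule (ZMod 2) G) (b : G ⧸ V) :
    Nat.card (V.mkQ ⁻¹' {b}) = Nat.card V := by
  rw [card_preimage_mkQ, Nat.card_coe_set_eq {b}, Set.ncard_singleton, mul_one]

lemma push_mkQ_conv [Finite G] (V : Submodule (ZMod 2) G) (p q : G → ℝ) :
    push V.mkQ (conv p q) = conv (push V.mkQ p) (push V.mkQ q) :=
  push_conv V.mkQ.toAddMonoidHom p q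

variable [Finite G]

lemma push_mkQ_apply_of_le_periods {V : Submodule (ZMod 2) G} (h : V ≤ periods p) (w : G) :
    push V.mkQ p (V.mkQ w) = Nat.card V * p w := by
  classical
  have := Fintype.ofFinite G
  have hcard : Nat.card V = (Finset.univ.filter fun a => V.mkQ a = V.mkQ w).card := by
    rw [← card_fiber_mkQ V (V.mkQ w), Nat.card_eq_fintype_card, ← Fintype.card_subtype]
    rfl
  rw [push_apply, hcard, ← nsmul_eq_mul, ← Finset.sum_const]
  refine Finset.sum_congr rfl fun a ha => ?_
  have hmem : a - w ∈ V := (Submodule.Quotient.eq V).1 (Finset.mem_filter.1 ha).2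
  rw [← mem_periods.1 (h hmem) w, add_sub_cancel]

lemma IsDist.ent_eq_of_le_periods {V : Submodule (ZMod 2) G} (hp : IsDist p) (h : V ≤ periods p) :
    ent p = ent (push V.mkQ p) + log (Nat.card V) := by
  have hlog : mean p (fun w => -log (push V.mkQ p (V.mkQ w))) =
      mean p fun w => -log (p w) - log (Nat.card V) :=
    mean_congr fun w hw => by
      rw [push_mkQ_apply_of_le_periods h,
        log_mul (Nat.cast_ne_zero.2 Nat.card_pos.ne') hw]
      ring
  rw [← ent_push, mean_sub, hp.mean_const, ← ent_eq_mean] at hlog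
  linarith

lemma IsDist.ent_le_ent_push_mkQ_add (hp : IsDist p) (V : Submodule (ZMod 2) G) :
    ent p ≤ ent (push V.mkQ p) + log (Nat.card V) := by
  classical
  have := Fintype.ofFinite G
  set r := push (fun a => (a, V.mkQ a)) p with hr_def
  have hr : IsDist r := hp.push _
  have hent : ent r = ent p := by
    have h : H[fun a => (a, V.mkQ a); p] = H[fun a => a; p] :=
      hp.ent_push_congr fun _ _ _ _ => ⟨fun h => congrArg Prod.fst h, fun h => by rw [h]⟩
    rwa [push_id] at h
  have hsnd : push Prod.snd r = push V.mkQ p := push_push _ _ _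
  have hfiber (b : G ⧸ V) (hb : push Prod.snd r b ≠ 0) :
      ent (fiber r b) ≤ log (Nat.card V) := by
    rw [← card_fiber_mkQ V b]
    refine (hr.fiber hb).ent_le_log_card fun a ha => ?_
    have hra : r (a, b) ≠ 0 := fun h => ha (by rw [fiber, h, zero_div])
    rw [hr_def, push_apply] at hra
    obtain ⟨a', ha', -⟩ := Finset.exists_ne_zero_of_sum_ne_zero hra
    obtain ⟨rfl, rfl⟩ := Prod.mk.injEq .. ▸ (Finset.mem_filter.1 ha').2
    rfl
  have hcond := (hr.push Prod.snd).mean_mono hfiber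
  rw [← condEnt_eq_mean, hr.condEnt_eq, (hr.push Prod.snd).mean_const, hent, hsnd] at hcond
  linarith

lemma IsDist.ent_le_log_card_periods (hp : IsDist p) (hq : IsDist q)
    (h : ent (conv q p) ≤ ent p) : ent q ≤ log (Nat.card (periods p)) := by
  obtain ⟨y₀, hy₀⟩ := hq.exists_ne_zero
  have hsupp (y : G) (hy : q y ≠ 0) : y ∈ (y₀ + ·) '' (periods p : Set G) := by
    refine ⟨y - y₀, mem_periods.2 fun z => ?_, add_sub_cancel y₀ y⟩
    have h₁ := hp.apply_sub_eq_conv hq h hy (z + y)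
    have h₂ := hp.apply_sub_eq_conv hq h hy₀ (z + y)
    rw [← add_sub_assoc, h₂, ← h₁, add_sub_cancel_right]
  refine (hq.ent_le_log_card hsupp).trans_eq ?_
  rw [Nat.card_image_of_injective (add_right_injective y₀)]
  rfl

/-- The minimizers are at distance zero, hence uniform on cosets of the same subspace, which then
captures most of the entropy of `p₀`: the entropic polynomial Freiman–Ruzsa theorem. -/
theorem IsDist.exists_ent_push_mkQ_le {p₀ q₀ : G → ℝ} (hp₀ : IsDist p₀) (hq₀ : IsDist q₀) :
    ∃ V : Submodule (ZMod 2) G, log (Nat.card V) ≤ 23 * (ent p₀ + ent q₀) ∧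
      ent (push V.mkQ p₀) ≤ 44 * dRuzsa p₀ q₀ := by
  obtain ⟨p, q, hmin⟩ := hp₀.exists_isPFRMinimizer hq₀
  obtain ⟨hp, hq⟩ := And.intro hmin.left hmin.right
  set V := periods p
  have hzero := hmin.dRuzsa_eq_zero hp₀ hq₀
  have hp_le := hp.ent_le_ent_conv hq
  have hq_le := hq.ent_le_ent_conv hp
  rw [conv_comm] at hq_le
  have hcard_ge : ent q ≤ log (Nat.card V) := hp.ent_le_log_card_periods hq <| by
    rw [conv_comm]
    unfold dRuzsa at hzero
    linarith
  have hdist : dRuzsa p₀ p ≤ 22 * dRuzsa p₀ q₀ := by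
    have hle := hmin.le q₀ p₀ hq₀ hp₀
    rw [pfrFunctional, pfrFunctional, dRuzsa_comm q₀ p₀, hzero] at hle
    have := hq₀.dRuzsa_nonneg hq
    linarith
  have hcard_le : log (Nat.card V) ≤ ent p := by
    have := hp.ent_eq_of_le_periods (V := V) le_rfl
    have := (hp.push V.mkQ).ent_nonneg
    linarith
  have hconv := (hp₀.conv hp).ent_eq_of_le_periods (periods_le_periods_conv p₀ p)
  rw [push_mkQ_conv] at hconv
  have hpush_le := (hp₀.push V.mkQ).ent_le_ent_conv (hp.push V.mkQ)
  have hent_le := hp₀.ent_le_ent_push_mkQ_add V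
  have hp_le' := hp.ent_le_ent_conv hp₀
  rw [conv_comm] at hp_le'
  have hconv_le := hp₀.ent_conv_le hq₀
  have hq₀_nonneg := hq₀.ent_nonneg
  unfold dRuzsa at *
  exact ⟨V, by linarith, by linarith⟩

end Periods

/-! ### Doubling mass and robust laws -/

section Doubling

variable {A B T : Type*} [Finite A] [Finite B] [Finite T]

lemma IsDist.condEnt_sub_condEnt_push_le {r : A × T → ℝ} (hr : IsDist r) (f : A → B) :
    condEnt r - condEnt (push (fun z => (f z.1, z.2)) r) ≤
      ent (push Prod.fst r) - ent (push f (push Prod.fst r)) := by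
  have hsub := hr.ent_submodular Prod.fst Prod.snd fun z => f z.1
  have h₁ := hr.ent_push_congr (X := fun z => z) (Y := fun z => ((z.1, z.2), f z.1))
    fun ⟨_, _⟩ ⟨_, _⟩ _ _ => by simp only [Prod.mk.injEq]; grind
  have h₂ := hr.ent_push_congr (X := Prod.fst) (Y := fun z => (z.1, f z.1))
    fun ⟨_, _⟩ ⟨_, _⟩ _ _ => by simp only [Prod.mk.injEq]; grind
  have h₃ := hr.ent_push_congr (X := fun z => (f z.1, z.2)) (Y := fun z => (z.2, f z.1))
    fun ⟨_, _⟩ ⟨_, _⟩ _ _ => by simp only [Prod.mk.injEq]; grind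
  rw [push_id] at h₁
  rw [hr.condEnt_eq, (hr.push _).condEnt_eq, push_push, push_push]
  linarith

variable {G H : Type*} [AddCommGroup G] [Finite G] [AddCommGroup H] [Finite H]
  {p q : G → ℝ}

lemma sDouble_comm (p q : G → ℝ) : sDouble p q = sDouble q p := by
  rw [sDouble, sDouble, conv_comm, add_comm (ent p)]

lemma IsDist.sDouble_le_ent_right (hp : IsDist p) (hq : IsDist q) : sDouble p q ≤ ent q := by
  have := hp.ent_le_ent_conv hq
  rw [sDouble]
  linarith

lemma IsDist.sDouble_le_sDouble_push_add (hp : IsDist p) (hq : IsDist q) (f : G →+ H) :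
    sDouble p q ≤ sDouble (push f p) (push f q) + (ent p - ent (push f p)) := by
  have hP := hp.prodDist hq
  have hsub := hP.ent_submodular Prod.fst (fun z => z.1 + z.2) fun z => f (z.1 + z.2)
  have h₁ := hP.ent_push_congr (X := fun z => z)
    (Y := fun z => ((z.1, z.1 + z.2), f (z.1 + z.2))) fun ⟨_, _⟩ ⟨_, _⟩ _ _ => by
      simp only [Prod.mk.injEq]; grind
  have h₂ := hP.ent_push_congr (X := fun z => z.1 + z.2)
    (Y := fun z => (z.1 + z.2, f (z.1 + z.2))) fun ⟨_, _⟩ ⟨_, _⟩ _ _ => by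
      simp only [Prod.mk.injEq]; grind
  have h₃ := hP.ent_push_congr (X := fun z => (z.1, f z.2))
    (Y := fun z => (z.1, f (z.1 + z.2))) fun ⟨_, _⟩ ⟨_, _⟩ _ _ => by
      simp only [Prod.mk.injEq, map_add]; grind
  have h₄ : ent (push (fun z => (z.1, f z.2)) (prodDist p q)) = ent p + ent (push f q) := by
    rw [push_prodDist_map (fun x => x) f, push_id, hp.ent_prodDist (hq.push f)]
  have h₅ : push (fun z => f (z.1 + z.2)) (prodDist p q) = conv (push f p) (push f q) := by
    rw [← push_conv, conv_eq_push, push_push]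
  rw [push_id, hp.ent_prodDist hq] at h₁
  rw [← conv_eq_push] at h₂
  rw [h₅] at hsub
  unfold sDouble
  linarith

end Doubling

section Robust

/-- A law is `β`-robust if passing to the quotient by a subspace `V` never loses more than
`β log |V|` of its entropy. -/
def IsRobust {G : Type*} [AddCommGroup G] [Module (ZMod 2) G] (β : ℝ) (p : G → ℝ) : Prop :=
  ∀ V : Submodule (ZMod 2) G, ent p - ent (push V.mkQ p) ≤ β * log (Nat.card V)

/-- Statement `B(η, 0, L)` with arbitrary finite vector spaces over `𝔽₂` in place of `𝔽₂ⁿ`, so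
that it passes to quotients, and with the entropy of `𝐔_V` written as `log |V|`. -/
def StBZero.{u} (η L : ℝ) : Prop :=
  ∀ (G : Type u) [AddCommGroup G] [Module (ZMod 2) G] [Finite G] (p q : G → ℝ),
    IsDist p → IsDist q → ∃ V : Submodule (ZMod 2) G,
      log (Nat.card V) ≤ L * (ent p + ent q) ∧
      sDouble (push V.mkQ p) (push V.mkQ q) ≤ η * (ent (push V.mkQ p) + ent (push V.mkQ q))

universe u

variable {G : Type u} [AddCommGroup G] [Module (ZMod 2) G]

lemma card_comap_mkQ (V : Submodule (ZMod 2) G) (W : Submodule (ZMod 2) (G ⧸ V)) :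
    Nat.card (W.comap V.mkQ) = Nat.card V * Nat.card W :=
  card_preimage_mkQ V W

variable [Finite G]

lemma IsDist.ent_push_mkQ_comap {p : G → ℝ} (hp : IsDist p) (V : Submodule (ZMod 2) G)
    (W : Submodule (ZMod 2) (G ⧸ V)) :
    ent (push (W.comap V.mkQ).mkQ p) = ent (push W.mkQ (push V.mkQ p)) := by
  rw [push_push]
  refine hp.ent_push_congr fun a b _ _ => ?_
  simp only [Submodule.mkQ_apply, Submodule.Quotient.eq, Submodule.mem_comap,
    ← Submodule.Quotient.mk_sub]

/-- Minimize `∑ H[π_V(Xᵢ)] + β log |V|` over all subspaces `V`. -/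
lemma exists_forall_isRobust_push_mkQ {ι : Type*} [Fintype ι] {P : ι → G → ℝ}
    (hP : ∀ i, IsDist (P i)) (β : ℝ) :
    ∃ V : Submodule (ZMod 2) G, β * log (Nat.card V) ≤ ∑ i, ent (P i) ∧
      ∀ i, IsRobust β (push V.mkQ (P i)) := by
  obtain ⟨V, hV⟩ := Finite.exists_min fun V : Submodule (ZMod 2) G =>
    ∑ i, ent (push V.mkQ (P i)) + β * log (Nat.card V)
  refine ⟨V, ?_, fun i W => ?_⟩
  · have hbot := hV ⊥
    have hle : ∑ i, ent (push (⊥ : Submodule (ZMod 2) G).mkQ (P i)) ≤ ∑ i, ent (P i) :=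
      Finset.sum_le_sum fun i _ => (hP i).ent_push_le_ent _
    have hnonneg : 0 ≤ ∑ i, ent (push V.mkQ (P i)) :=
      Finset.sum_nonneg fun i _ => ((hP i).push V.mkQ).ent_nonneg
    have hcard : Nat.card (⊥ : Submodule (ZMod 2) G) = 1 := Nat.card_unique
    rw [hcard, Nat.cast_one, log_one, mul_zero] at hbot
    linarith
  · have hcomap := hV (W.comap V.mkQ)
    have hVpos : (Nat.card V : ℝ) ≠ 0 := Nat.cast_ne_zero.2 Nat.card_pos.ne'
    have hWpos : (Nat.card W : ℝ) ≠ 0 := Nat.cast_ne_zero.2 Nat.card_pos.ne'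
    have hle := Finset.single_le_sum
      (f := fun i => ent (push V.mkQ (P i)) - ent (push W.mkQ (push V.mkQ (P i))))
      (fun j _ => sub_nonneg.2 (((hP j).push V.mkQ).ent_push_le_ent W.mkQ)) (Finset.mem_univ i)
    simp only [card_comap_mkQ, (hP _).ent_push_mkQ_comap, Nat.cast_mul,
      log_mul hVpos hWpos] at hcomap
    rw [Finset.sum_sub_distrib] at hle
    linarith

variable {η L β β₁ : ℝ} {p q : G → ℝ}

lemma StBZero.sDouble_le (hB : StBZero.{u} η L) (hη : 0 ≤ η) (hβ : 0 ≤ β) (hp : IsDist p)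
    (hq : IsDist q) (hrob : IsRobust β p) :
    sDouble p q ≤ (η + β * L) * (ent p + ent q) := by
  obtain ⟨V, hcard, hV⟩ := hB G p q hp hq
  have hpush := hp.sDouble_le_sDouble_push_add hq V.mkQ.toAddMonoidHom
  have hηle := mul_le_mul_of_nonneg_left
    (add_le_add (hp.ent_push_le_ent V.mkQ) (hq.ent_push_le_ent V.mkQ)) hη
  have hβle := (hrob V).trans (mul_le_mul_of_nonneg_left hcard hβ)
  calc sDouble p q ≤ _ := hpush
    _ ≤ η * (ent p + ent q) + β * (L * (ent p + ent q)) := add_le_add (hV.trans hηle) hβle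
    _ = (η + β * L) * (ent p + ent q) := by ring

lemma IsRobust.condEnt_sub_condEnt_push_le {T : Type*} [Finite T] {r : G × T → ℝ} (hr : IsDist r)
    (hrob : IsRobust β (push Prod.fst r)) (V : Submodule (ZMod 2) G) :
    condEnt r - condEnt (push (fun z => (V.mkQ z.1, z.2)) r) ≤ β * log (Nat.card V) :=
  (hr.condEnt_sub_condEnt_push_le V.mkQ).trans (hrob V)

lemma condEnt_push_mkQ_eq_mean {T : Type*} [Finite T] (r : G × T → ℝ) (V : Submodule (ZMod 2) G) :
    condEnt (push (fun z => (V.mkQ z.1, z.2)) r) =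
      mean (push Prod.snd r) fun t => ent (push V.mkQ (fiber r t)) := by
  rw [condEnt_eq_mean, push_push]
  simp only [push_fiber]

/-- The robustness of `Y` is used at the subspace that makes `X` robust. -/
lemma StBZero.mean_sDouble_fiber_le {T : Type*} [Finite T] {r : G × T → ℝ}
    (hB : StBZero.{u} η L) (hη : 0 ≤ η) (hL : 0 ≤ L) (hβ : 0 < β) (hβ₁ : 0 ≤ β₁) (hp : IsDist p)
    (hr : IsDist r) (hrob : IsRobust β₁ (push Prod.fst r)) :
    mean (push Prod.snd r) (fun t => sDouble p (fiber r t)) ≤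
      (η + β * L + β₁ / β) * (ent p + condEnt r) := by
  obtain ⟨V, hcard, hV⟩ := exists_forall_isRobust_push_mkQ (P := fun _ : Unit => p) (fun _ => hp) β
  rw [Fintype.sum_unique, mul_comm, ← le_div_iff₀ hβ] at hcard
  have hfiber (t : T) (ht : push Prod.snd r t ≠ 0) : sDouble p (fiber r t) ≤
      (η + β * L) * (ent p + ent (fiber r t)) +
        (ent (fiber r t) - ent (push V.mkQ (fiber r t))) := by
    have hY := hr.fiber ht
    have hpush := hY.sDouble_le_sDouble_push_add hp V.mkQ.toAddMonoidHom
    rw [sDouble_comm, sDouble_comm (push _ _)] at hpush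
    have hrobust := hB.sDouble_le hη hβ.le (hp.push V.mkQ) (hY.push V.mkQ) (hV ())
    refine hpush.trans (add_le_add_left (hrobust.trans ?_) _)
    gcongr
    exacts [hp.ent_push_le_ent _, hY.ent_push_le_ent _]
  have hmean := (hr.push Prod.snd).mean_mono hfiber
  rw [mean_add, mean_sub, mean_const_mul, mean_add, (hr.push _).mean_const, ← condEnt_eq_mean,
    ← condEnt_push_mkQ_eq_mean] at hmean
  have hloss : condEnt r - condEnt (push (fun z => (V.mkQ z.1, z.2)) r) ≤ β₁ * (ent p / β) :=
    (hrob.condEnt_sub_condEnt_push_le hr V).trans (mul_le_mul_of_nonneg_left hcard hβ₁)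
  have hextra : 0 ≤ β₁ / β * condEnt r := mul_nonneg (by positivity) hr.condEnt_nonneg
  linear_combination hmean + hloss + hextra

lemma StBZero.sCond_le {T U : Type*} [Finite T] [Finite U] {r₁ : G × T → ℝ} {r₂ : G × U → ℝ}
    (hB : StBZero.{u} η L) (hη : 0 ≤ η) (hL : 0 ≤ L) (hβ : 0 < β) (hβ₁ : 0 ≤ β₁)
    (h₁ : IsDist r₁) (h₂ : IsDist r₂) (hrob : IsRobust β₁ (push Prod.fst r₂)) :
    sCond r₁ r₂ ≤ (η + β * L + β₁ / β) * (condEnt r₁ + condEnt r₂) := by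
  have hmean := (h₁.push Prod.snd).mean_mono fun t ht =>
    hB.mean_sDouble_fiber_le hη hL hβ hβ₁ (h₁.fiber ht) h₂ hrob
  rwa [mean_const_mul, mean_add, (h₁.push _).mean_const, ← condEnt_eq_mean,
    ← sCond_eq_mean] at hmean

/-- Choosing `V` for the pair `A_c, B_c` by the Freiman–Ruzsa theorem, conditionally on the common
second coordinate, leaves `A_c` with little entropy modulo `V`, hence `X` and `A_c` with little
doubling mass modulo `V`, while the robustness of `X` controls what `X` loses modulo `V`. -/
lemma IsRobust.sCond_le {T U : Type*} [Finite T] [Finite U] {r : G × T → ℝ} {a b : G × U → ℝ}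
    (hβ : 0 ≤ β) (hr : IsDist r) (ha : IsDist a) (hb : IsDist b)
    (hab : push Prod.snd b = push Prod.snd a) (hrob : IsRobust β (push Prod.fst r)) :
    sCond r a ≤ 23 * β * (condEnt a + condEnt b) +
      44 * mean (push Prod.snd a) fun c => dRuzsa (fiber a c) (fiber b c) := by
  have hfiber (c : U) (hc : push Prod.snd a c ≠ 0) :
      mean (push Prod.snd r) (fun u => sDouble (fiber r u) (fiber a c)) ≤
        23 * β * (ent (fiber a c) + ent (fiber b c)) + 44 * dRuzsa (fiber a c) (fiber b c) := by
    have hac := ha.fiber hc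
    obtain ⟨V, hcard, hV⟩ := hac.exists_ent_push_mkQ_le (hb.fiber (hab ▸ hc))
    have hle (u : T) (hu : push Prod.snd r u ≠ 0) : sDouble (fiber r u) (fiber a c) ≤
        ent (push V.mkQ (fiber a c)) + (ent (fiber r u) - ent (push V.mkQ (fiber r u))) := by
      have hX := hr.fiber hu
      refine (hX.sDouble_le_sDouble_push_add hac V.mkQ.toAddMonoidHom).trans ?_
      exact add_le_add_left ((hX.push V.mkQ).sDouble_le_ent_right (hac.push V.mkQ)) _
    have hmean := (hr.push Prod.snd).mean_mono hle
    rw [mean_add, mean_sub, (hr.push _).mean_const, ← condEnt_eq_mean,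
      ← condEnt_push_mkQ_eq_mean] at hmean
    have hloss := (hrob.condEnt_sub_condEnt_push_le hr V).trans
      (mul_le_mul_of_nonneg_left hcard hβ)
    linarith
  have hmean := (ha.push Prod.snd).mean_mono hfiber
  rwa [mean_add, mean_const_mul, mean_const_mul, mean_add, ← condEnt_eq_mean, ← hab,
    ← condEnt_eq_mean, hab, mean_comm, ← sCond_eq_mean] at hmean

end Robust

/-! ### The key inequality -/

section Key

variable {G : Type*} [AddCommGroup G] [Finite G] {p q : G → ℝ}

lemma IsDist.ent_fst_add_crossSum_le (hp : IsDist p) (hq : IsDist q) :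
    H[fun w => (w.1.1, ((w.1.1 + crossSum w.2, w.1.1 + w.1.2), totalSum w.2));
        prodDist (prodDist p q) (quad p q)] ≤ ent p + ent q + 2 * ent (conv p q) := by
  have h₂ := hp.prodDist hq
  have h₄ := hp.quad hq
  have hle := (h₂.prodDist h₄).ent_push_le
    (X := fun w => (w.1, (crossSum w.2, totalSum w.2)))
    (Y := fun w => (w.1.1, ((w.1.1 + crossSum w.2, w.1.1 + w.1.2), totalSum w.2)))
    fun _ _ _ _ => by
      simp only [Prod.mk.injEq]
      grind
  rwa [push_prodDist_map (fun z => z) (fun z => (crossSum z, totalSum z)), push_id,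
    h₂.ent_prodDist (h₄.push _), hp.ent_prodDist hq, hp.ent_crossSum_totalSum hq] at hle

/-- The roles of `(X, Y)` and `(X₁, Y₁)` are exchanged here: in terms of the quadruple
`(X, X₂, Y, Y₂)` the variables other than `X₁` and `Y₁` are those of `quadEnt`. -/
lemma IsDist.ent_rest_add_crossSum_le (hp : IsDist p) (hq : IsDist q) :
    H[fun w => ((w.1.1 + w.2.2.2.2, w.2.2.1 + w.2.2.2.2, w.2.1, w.2.2.2.1),
        ((w.1.1 + crossSum w.2, w.1.1 + w.1.2), totalSum w.2));
        prodDist (prodDist p q) (quad p q)] ≤ ent p + ent q + quadEnt p q := by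
  have h₂ := hp.prodDist hq
  have h₄ := hp.quad hq
  have hlaw : push (fun w => ((w.2.1, w.2.2.2.1), ((w.1.1 + w.2.2.2.2, w.1.1 + w.1.2),
        w.1.1 + w.2.2.1 + w.1.2 + w.2.2.2.2))) (prodDist (prodDist p q) (quad p q)) =
      prodDist (prodDist p q) (push (fun z => ((crossSum z, diagSum z), totalSum z)) (quad p q)) :=
    eq_of_forall_mean_eq fun Φ => by
      simp only [mean_push, mean_quad, mean_prodDist, crossSum, diagSum, totalSum, mean_comm q p]
      rw [mean_comm p p]
      refine mean_congr fun _ _ => mean_congr fun _ _ => mean_congr fun _ _ => ?_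
      rw [mean_comm q q]
  have hle := (h₂.prodDist h₄).ent_push_le
    (X := fun w => ((w.2.1, w.2.2.2.1), ((w.1.1 + w.2.2.2.2, w.1.1 + w.1.2),
      w.1.1 + w.2.2.1 + w.1.2 + w.2.2.2.2)))
    (Y := fun w => ((w.1.1 + w.2.2.2.2, w.2.2.1 + w.2.2.2.2, w.2.1, w.2.2.2.1),
      ((w.1.1 + crossSum w.2, w.1.1 + w.1.2), totalSum w.2))) fun w w' _ _ => by
      simp only [crossSum, totalSum, Prod.mk.injEq]
      grind
  rwa [hlaw, h₂.ent_prodDist (h₄.push _), hp.ent_prodDist hq, ← quadEnt] at hle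

lemma IsDist.ent_add_crossSum_le (hp : IsDist p) (hq : IsDist q) :
    H[fun w => ((w.1.1 + crossSum w.2, w.1.1 + w.1.2), totalSum w.2);
        prodDist (prodDist p q) (quad p q)] ≤
      2 * ent (conv p q) + quadEnt p q - (ent p + ent q) := by
  have hP := (hp.prodDist hq).prodDist (hp.quad hq)
  have hsub := hP.ent_submodular (fun w => w.1.1)
    (fun w => (w.1.1 + w.2.2.2.2, w.2.2.1 + w.2.2.2.2, w.2.1, w.2.2.2.1))
    (fun w => ((w.1.1 + crossSum w.2, w.1.1 + w.1.2), totalSum w.2))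
  have hall := hP.ent_push_le (Y := fun w => w)
    (X := fun w => ((w.1.1, (w.1.1 + w.2.2.2.2, w.2.2.1 + w.2.2.2.2, w.2.1, w.2.2.2.1)),
      ((w.1.1 + crossSum w.2, w.1.1 + w.1.2), totalSum w.2)))
    fun ⟨⟨_, _⟩, _, _, _, _⟩ ⟨⟨_, _⟩, _, _, _, _⟩ _ _ => by
      simp only [Prod.mk.injEq]
      grind
  rw [push_id, (hp.prodDist hq).ent_prodDist (hp.quad hq), hp.ent_prodDist hq,
    hp.ent_quad hq] at hall
  linarith [hp.ent_fst_add_crossSum_le hq, hp.ent_rest_add_crossSum_le hq]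

variable [Module (ZMod 2) G]

lemma IsDist.condEnt_condSum_jointSum_crossLaw_le (hp : IsDist p) (hq : IsDist q) :
    condEnt (condSum (jointSum p q) (crossLaw p q)) ≤
      ent (conv p q) + quadEnt p q - ent p - ent q - ent (conv (conv p q) (conv p q)) := by
  have h₂ := hp.prodDist hq
  have h₄ := hp.quad hq
  have hlaw : condSum (jointSum p q) (crossLaw p q) =
      push (fun w => (w.1.1 + crossSum w.2, (w.1.1 + w.1.2,
        (crossSum w.2 + diagSum w.2, totalSum w.2)))) (prodDist (prodDist p q) (quad p q)) :=
    eq_of_forall_mean_eq fun Φ => by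
      simp only [condSum, jointSum, crossLaw, mean_push, mean_prodDist]
  have hcongr := (h₂.prodDist h₄).ent_push_congr
    (X := fun w => (w.1.1 + crossSum w.2, (w.1.1 + w.1.2,
      (crossSum w.2 + diagSum w.2, totalSum w.2))))
    (Y := fun w => (((w.1.1 + crossSum w.2, w.1.1 + w.1.2), crossSum w.2 + diagSum w.2),
      totalSum w.2)) fun _ _ _ _ => by
      simp only [Prod.mk.injEq]
      grind
  have hsub := (h₂.prodDist h₄).ent_submodular (fun w => (w.1.1 + crossSum w.2, w.1.1 + w.1.2))
    (fun w => crossSum w.2 + diagSum w.2) (fun w => totalSum w.2)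
  have hsnd {C : Type _} [Finite C] (f : G × G × G × G → C) :
      push (fun w => f w.2) (prodDist (prodDist p q) (quad p q)) = push f (quad p q) :=
    eq_of_forall_mean_eq fun Φ => by
      simp only [mean_push, mean_prodDist, hp.mean_const, hq.mean_const]
  rw [hsnd totalSum, hsnd fun z => (crossSum z + diagSum z, totalSum z), push_totalSum,
    hp.ent_crossSum_add_diagSum_totalSum hq] at hsub
  rw [((hp.jointSum hq).condSum (hp.crossLaw hq)).condEnt_eq, push_snd_condSum, push_snd_jointSum,
    (hp.conv hq).ent_prodDist ((hp.crossLaw hq).push _), crossLaw, push_push,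
    hp.ent_crossSum_add_diagSum_totalSum hq, ← crossLaw, hlaw, hcongr]
  linarith [hp.ent_add_crossSum_le hq]

lemma IsRobust.two_mul_sub_quadEnt_le {β : ℝ} (hβ : 0 ≤ β) (hp : IsDist p) (hq : IsDist q)
    (hrob : IsRobust β p) :
    2 * (ent p + ent q) - quadEnt p q ≤
      46 * β * (quadEnt p q - (ent (conv p p) + ent (conv q q))) +
        44 * (8 * ent (conv p q) - 3 * ent (conv (conv p q) (conv p q)) - 3 * quadEnt p q +
          2 * (ent (conv p p) + ent (conv q q))) +
        (2 * ent (conv p q) + (ent (conv p p) + ent (conv q q)) -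
          ent (conv (conv p q) (conv p q)) - quadEnt p q) := by
  have hA := hp.crossLaw hq
  have hB := hp.diagLaw hq
  have hsnd : push Prod.snd (diagLaw p q) = push Prod.snd (crossLaw p q) := by
    simp only [diagLaw, crossLaw, push_push]
  have hsCond := IsRobust.sCond_le hβ (hp.jointSum hq) hA hB hsnd
    (by rwa [push_fst_jointSum p hq])
  have hdist : mean (push Prod.snd (crossLaw p q)) (fun c =>
      dRuzsa (fiber (crossLaw p q) c) (fiber (diagLaw p q) c)) ≤
      8 * ent (conv p q) - 3 * ent (conv (conv p q) (conv p q)) - 3 * quadEnt p q +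
        2 * (ent (conv p p) + ent (conv q q)) := by
    simp only [dRuzsa, div_eq_mul_inv, mean_sub, mean_mul_const]
    rw [← condEnt_eq_mean, ← hsnd, ← condEnt_eq_mean, hsnd, hp.condEnt_crossLaw hq,
      hp.condEnt_diagLaw hq]
    linarith [hp.mean_ent_conv_fiber_crossLaw_le hq]
  rw [(hp.jointSum hq).sCond_eq hA, hp.condEnt_jointSum hq, hp.condEnt_crossLaw hq,
    hp.condEnt_diagLaw hq] at hsCond
  linarith [hp.condEnt_condSum_jointSum_crossLaw_le hq]

end Key

/-! ### Decreasing `η` -/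

section Iteration

/-- With `D = H[X] + H[Y]`, `r = H[X + Y]`, `s = H[X₁ + X₂] + H[Y₁ + Y₂]`,
`S = H[X₁ + X₂ + Y₁ + Y₂]` and `J = quadEnt`: the bound `hkey` is what makes the saving exceed the
linear order `e` given by the other bounds. -/
lemma sub_le_mul_of_key_bound {e β D r s S J : ℝ} (he : 0 ≤ e) (he₁ : e ≤ 1) (hβ : 0 ≤ β)
    (hβe : 92 * β ≤ e) (hD : 0 ≤ D) (hr : r ≤ D) (hrS : 2 * r - S ≤ e * (2 * r))
    (hsS : s - S ≤ e * s) (hrJ : 2 * D - J ≤ e * (2 * D - 2 * r))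
    (hsJ : 2 * D - J ≤ e * (2 * D - s)) (hJS : J + S ≤ 2 * r + s)
    (hkey : 2 * D - J ≤ 46 * β * (J - s) + 44 * (8 * r - 3 * S - 3 * J + 2 * s) +
      (2 * r + s - S - J)) :
    D - r ≤ (e - e ^ 2 / 270) * D := by
  have hJs : J - s ≤ 2 * (e * D) := by
    linarith [mul_le_mul_of_nonneg_left hr he]
  have hcombined : (268 + 2 * e) * (D - r) ≤ e * D * (268 + 92 * β) := by
    linear_combination hkey + 44 * hrS + 90 * hsS + 43 * hrJ + 90 * hsJ + hJS +
      46 * β * hJs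
  have hfactor : 268 + 92 * β ≤ (268 + 2 * e) * (1 - e / 270) := by
    nlinarith
  have hmul : (268 + 2 * e) * (D - r) ≤ (268 + 2 * e) * ((e - e ^ 2 / 270) * D) := by
    linear_combination hcombined + e * D * hfactor
  exact le_of_mul_le_mul_left hmul (by linarith)

universe u

variable {η L : ℝ}

lemma StBZero.mono {η' L' : ℝ} (hB : StBZero.{u} η L) (hη : η ≤ η') (hL : L ≤ L') :
    StBZero.{u} η' L' := by
  intro G _ _ _ p q hp hq
  obtain ⟨V, hcard, hV⟩ := hB G p q hp hq
  exact ⟨V,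
    hcard.trans (mul_le_mul_of_nonneg_right hL (add_nonneg hp.ent_nonneg hq.ent_nonneg)),
    hV.trans (mul_le_mul_of_nonneg_right hη
      (add_nonneg (hp.push V.mkQ).ent_nonneg (hq.push V.mkQ).ent_nonneg))⟩

lemma stBZero_one_half_one : StBZero.{u} (1 / 2) 1 := by
  intro G _ _ _ p q hp hq
  have hcard : Nat.card (⊥ : Submodule (ZMod 2) G) = 1 := Nat.card_unique
  refine ⟨⊥, ?_, ?_⟩
  · rw [hcard, Nat.cast_one, log_one, one_mul]
    exact add_nonneg hp.ent_nonneg hq.ent_nonneg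
  · have hp' := hp.push (⊥ : Submodule (ZMod 2) G).mkQ
    have hq' := hq.push (⊥ : Submodule (ZMod 2) G).mkQ
    have hleft := hq'.sDouble_le_ent_right hp'
    rw [sDouble_comm] at hleft
    linarith [hp'.sDouble_le_ent_right hq']

lemma StBZero.sDouble_le_of_isRobust {G : Type u} [AddCommGroup G] [Module (ZMod 2) G] [Finite G]
    {β β' e : ℝ} {p q : G → ℝ} (hB : StBZero.{u} η L) (hη : 0 ≤ η) (hL : 0 ≤ L) (hβ : 0 ≤ β)
    (hβ' : 0 < β') (he₁ : e ≤ 1) (hβe : 92 * β ≤ e) (hLe : η + β * L ≤ e)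
    (hLe' : η + β' * L + β / β' ≤ e) (hp : IsDist p) (hq : IsDist q) (hrp : IsRobust β p)
    (hrq : IsRobust β q) (hrpq : IsRobust β (conv p q)) (hrpp : IsRobust β (conv p p)) :
    sDouble p q ≤ (e - e ^ 2 / 270) * (ent p + ent q) := by
  have hpq := hp.conv hq
  have hpp := hp.conv hp
  have hqq := hq.conv hq
  have hrS := (hB.sDouble_le hη hβ hpq hpq hrpq).trans
    (mul_le_mul_of_nonneg_right hLe (add_nonneg hpq.ent_nonneg hpq.ent_nonneg))
  have hsS := (hB.sDouble_le hη hβ hpp hqq hrpp).trans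
    (mul_le_mul_of_nonneg_right hLe (add_nonneg hpp.ent_nonneg hqq.ent_nonneg))
  have hrJ := hB.sCond_le hη hL hβ' hβ (hp.jointSum hq) (hq.jointSum hp)
    (by rwa [push_fst_jointSum q hp])
  have hsJ := hB.sCond_le hη hL hβ' hβ (hp.jointSum hp) (hq.jointSum hq)
    (by rwa [push_fst_jointSum q hq])
  replace hrJ := hrJ.trans (mul_le_mul_of_nonneg_right hLe'
    (add_nonneg (hp.jointSum hq).condEnt_nonneg (hq.jointSum hp).condEnt_nonneg))
  replace hsJ := hsJ.trans (mul_le_mul_of_nonneg_right hLe'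
    (add_nonneg (hp.jointSum hp).condEnt_nonneg (hq.jointSum hq).condEnt_nonneg))
  rw [(hp.jointSum hq).sCond_eq (hq.jointSum hp), hp.condEnt_jointSum hq, hq.condEnt_jointSum hp,
    hp.condEnt_condSum_jointSum_swap hq, conv_comm q p] at hrJ
  rw [(hp.jointSum hp).sCond_eq (hq.jointSum hq), hp.condEnt_jointSum hp, hq.condEnt_jointSum hq,
    hp.condEnt_condSum_jointSum_self hq] at hsJ
  rw [sDouble] at hrS hsS ⊢
  rw [conv_conv_conv_comm] at hsS
  have hη' : 0 ≤ e := (by positivity : 0 ≤ 92 * β).trans hβe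
  exact sub_le_mul_of_key_bound hη' he₁ hβ hβe (add_nonneg hp.ent_nonneg hq.ent_nonneg)
    (hp.ent_conv_le hq) (by linarith) hsS (by linarith) (by linarith) (hp.quadEnt_add_le hq)
    (hrp.two_mul_sub_quadEnt_le hβ hp hq)

lemma exists_isRobust_conv {G : Type u} [AddCommGroup G] [Module (ZMod 2) G] [Finite G]
    {p q : G → ℝ} (hp : IsDist p) (hq : IsDist q) (β : ℝ) :
    ∃ V : Submodule (ZMod 2) G, β * log (Nat.card V) ≤ 4 * (ent p + ent q) ∧
      IsRobust β (push V.mkQ p) ∧ IsRobust β (push V.mkQ q) ∧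
      IsRobust β (conv (push V.mkQ p) (push V.mkQ q)) ∧
      IsRobust β (conv (push V.mkQ p) (push V.mkQ p)) := by
  obtain ⟨V, hcard, hrob⟩ := exists_forall_isRobust_push_mkQ (P := ![p, q, conv p q, conv p p])
    (by simp [Fin.forall_fin_succ, hp, hq, hp.conv hq, hp.conv hp]) β
  simp only [Fin.sum_univ_four, Matrix.cons_val] at hcard
  simp only [← push_mkQ_conv]
  exact ⟨V, by linarith [hp.ent_conv_le hq, hp.ent_conv_le hp, hq.ent_nonneg], hrob 0, hrob 1,
    hrob 2, hrob 3⟩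

lemma StBZero.step (hB : StBZero.{u} η L) (hη : 0 < η) (hη₂ : η ≤ 1 / 2) (hL : 1 ≤ L) :
    StBZero.{u} (η - η ^ 2 / 360) (18662400 / η ^ 4 * L) := by
  intro G _ _ _ p q hp hq
  set κ := η ^ 2 / 1080 with hκ
  set β := κ ^ 2 / (4 * L) with hβ
  have hL₀ : 0 < L := by linarith
  have hκ₀ : 0 < κ := by positivity
  have hβ₀ : 0 < β := by positivity
  obtain ⟨V, hcard, hrp, hrq, hrpq, hrpp⟩ := exists_isRobust_conv hp hq β
  refine ⟨V, le_of_mul_le_mul_left (hcard.trans_eq ?_) hβ₀, ?_⟩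
  · rw [hβ, hκ]
    field_simp
    ring
  · have hκη : κ ≤ η / 1080 := by nlinarith
    have hβL : β * L = κ ^ 2 / 4 := by rw [hβ]; field_simp
    have hβκ : β ≤ κ ^ 2 / 4 := by nlinarith
    have hκsq : κ ^ 2 / 4 ≤ κ / 92 := by nlinarith
    have hsum : η + κ / (2 * L) * L + β / (κ / (2 * L)) = η + κ := by
      rw [hβ]
      field_simp
      ring
    have hp' := hp.push V.mkQ
    have hq' := hq.push V.mkQ
    refine (hB.sDouble_le_of_isRobust (e := η + κ) hη.le hL₀.le hβ₀.le
      (by positivity : 0 < κ / (2 * L)) (by linarith) (by linarith) (by linarith) hsum.le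
      hp' hq' hrp hrq hrpq hrpp).trans ?_
    refine mul_le_mul_of_nonneg_right ?_ (add_nonneg hp'.ent_nonneg hq'.ent_nonneg)
    have : η ^ 2 ≤ (η + κ) ^ 2 := by gcongr; linarith
    linarith

/-- A step lowers `η = 1 / x` at least to `1 / (x + 1 / 360)`, and `18662400 ≤ 2 ^ 25 ≤ x ^ 25`. -/
lemma stBZero_one_div_two_add (j : ℕ) :
    StBZero.{u} (1 / (2 + j / 360)) ((2 + j / 360) ^ (29 * j)) := by
  induction j with
  | zero => simpa using stBZero_one_half_one
  | succ j ih =>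
    set x : ℝ := 2 + j / 360
    have hx₂ : 2 ≤ x := le_add_of_nonneg_right (by positivity)
    have hx' : 2 + ((j + 1 : ℕ) : ℝ) / 360 = x + 1 / 360 := by
      push_cast
      ring
    rw [hx']
    refine (ih.step (by positivity) (one_div_le_one_div_of_le two_pos hx₂)
      (one_le_pow₀ (by linarith))).mono ?_ ?_
    · rw [le_div_iff₀ (by positivity)]
      have hmul : (1 / x - (1 / x) ^ 2 / 360) * (x + 1 / 360) = 1 - (1 / x) ^ 2 / 129600 := by
        field_simp
        ring
      rw [hmul]
      exact sub_le_self _ (by positivity)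
    · calc 18662400 / (1 / x) ^ 4 * x ^ (29 * j)
          = 18662400 * x ^ 4 * x ^ (29 * j) := by rw [one_div, inv_pow, div_inv_eq_mul]
        _ ≤ x ^ 25 * x ^ 4 * x ^ (29 * j) := by
          gcongr
          exact (by norm_num : (18662400 : ℝ) ≤ 2 ^ 25).trans (by gcongr)
        _ = x ^ (29 * (j + 1)) := by ring
        _ ≤ (x + 1 / 360) ^ (29 * (j + 1)) := by gcongr; linarith

lemma stBZero_rpow (hη : 0 < η) (hη₂ : η ≤ 1 / 2) : StBZero.{u} η (η ^ (-(20880 / η))) := by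
  have hX : 2 ≤ η⁻¹ := by rwa [le_inv_comm₀ two_pos hη, ← one_div]
  set j := ⌈360 * (η⁻¹ - 2)⌉₊
  have hj : 360 * (η⁻¹ - 2) ≤ j := Nat.le_ceil _
  have hj' : (j : ℝ) < 360 * (η⁻¹ - 2) + 1 := Nat.ceil_lt_add_one (by linarith)
  refine (stBZero_one_div_two_add j).mono ?_ ?_
  · rw [one_div, inv_le_comm₀ (by positivity) hη]
    linarith
  · calc (2 + (j : ℝ) / 360) ^ (29 * j)
        ≤ (η⁻¹ ^ 2) ^ (29 * j) := by gcongr; nlinarith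
      _ = η⁻¹ ^ ((58 * j : ℕ) : ℝ) := by rw [rpow_natCast, ← pow_mul]; ring_nf
      _ ≤ η⁻¹ ^ (20880 / η) := by
        refine rpow_le_rpow_of_exponent_le (by linarith) ?_
        push_cast
        rw [div_eq_mul_inv]
        linarith
      _ = η ^ (-(20880 / η)) := by rw [inv_rpow hη.le, rpow_neg hη.le]

theorem statement19_general :
    ∃ C : ℝ, 0 < C ∧ ∀ η : ℝ, 0 < η → η ≤ 1 / 2 → ∀ (G : Type u) [AddCommGroup G]
      [Module (ZMod 2) G] [Finite G] (p q : G → ℝ), IsDist p → IsDist q →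
        ∃ V : Submodule (ZMod 2) G,
          ent (unifOn (V : Set G)) ≤ η ^ (-(C / η)) * (ent p + ent q) ∧
          (1 - η) * (ent (push V.mkQ p) + ent (push V.mkQ q)) ≤
            ent (conv (push V.mkQ p) (push V.mkQ q)) := by
  refine ⟨20880, by norm_num, fun η hη hη₂ G _ _ _ p q hp hq => ?_⟩
  obtain ⟨V, hcard, hV⟩ := stBZero_rpow hη hη₂ G p q hp hq
  refine ⟨V, by rwa [ent_unifOn V.nonempty], ?_⟩
  rw [sDouble] at hV
  linarith

end Iteration

/-- There is `C > 0` such that `B(η, η², η^{−C/η})` holds for all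
`η ∈ (0, 1/2]`. -/
theorem statement19 :
    ∃ C : ℝ, 0 < C ∧ ∀ η : ℝ, 0 < η → η ≤ 1 / 2 → StB η (η ^ 2) (η ^ (-(C / η))) := by
  obtain ⟨C, hC, hB⟩ := statement19_general
  refine ⟨C, hC, fun η hη hη₂ n p q hp hq => ?_⟩
  obtain ⟨V, hcard, hV⟩ := hB η hη hη₂ (Fvec n) p q hp hq
  have hε := mul_nonneg (sq_nonneg η) (add_nonneg hp.ent_nonneg hq.ent_nonneg)
  exact ⟨V, hcard, (sub_le_self _ hε).trans hV⟩
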